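/- arXiv:2408.13737 — 2 statements merged into one kernel-verified Lean document; each statement's English description precedes it below -/
import Mathlib

section
/- Let q = p^n be a prime power with q > 1. Let f be an even, algebraic-valued, Dirichlet-type periodic function with period q. Then L'(0,f) is transcendental if and only if f is not identically zero. -/
open scoped Real

/-- The value at `s = 0` of the derivative of the analytic continuation of
`L(s,f) = ∑_{n ≥ 1} f(n)/n^s`, given via `L(s,f) = q^{-s} ∑_{a=1}^q f(a) ζ(s, a/q)`
with `ζ` the Hurwitz zeta function. -/
noncomputable def Lderiv0 (q : ℕ) (f : ℤ → ℂ) : ℂ :=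
  deriv (fun s : ℂ =>
    (q : ℂ) ^ (-s) *
      ∑ a ∈ Finset.Icc 1 q, f a * HurwitzZeta.hurwitzZeta (((a : ℝ) / q : ℝ) : UnitAddCircle) s) 0


/-! Part 1: analysis -/

namespace BK
open Complex

/-- Entire functions as a submodule. -/
def entireSub : Submodule ℂ (ℂ → ℂ) where
  carrier := {g | Differentiable ℂ g}
  add_mem' := fun ha hb => Differentiable.add ha hb
  zero_mem' := differentiable_const 0
  smul_mem' := fun c _ h => Differentiable.const_smul h c

lemma entire_contDiff {g : ℂ → ℂ} (hg : Differentiable ℂ g) (n : WithTop ℕ∞) : ContDiff ℂ n g :=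
  hg.contDiff

/-- division by one linear factor -/
lemma entire_div_pow (T : ℕ) : ∀ (g : ℂ → ℂ), Differentiable ℂ g → ∀ s : ℂ,
    (∀ t < T, iteratedDeriv t g s = 0) →
    ∃ h : ℂ → ℂ, Differentiable ℂ h ∧ ∀ z, g z = (z - s) ^ T * h z := by
  intro g hg s hv
  have han : AnalyticAt ℂ g s := hg.analyticAt s
  have h1 : (T : ℕ∞) ≤ analyticOrderAt g s := by
    rw [natCast_le_analyticOrderAt_iff_iteratedDeriv_eq_zero han]
    exact hv
  rw [natCast_le_analyticOrderAt han] at h1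
  obtain ⟨k, hk, hke⟩ := h1
  refine ⟨Function.update (fun z => ((z - s) ^ T)⁻¹ * g z) s (k s), ?_, ?_⟩
  · intro z
    by_cases hz : z = s
    · subst hz
      refine (hk.differentiableAt).congr_of_eventuallyEq ?_
      filter_upwards [hke] with y hy
      by_cases hyz : y = z
      · subst hyz; simp
      · rw [Function.update_of_ne hyz, hy, smul_eq_mul, ← mul_assoc, inv_mul_cancel₀, one_mul]
        exact pow_ne_zero _ (sub_ne_zero.2 hyz)
    · have : DifferentiableAt ℂ (fun z => ((z - s) ^ T)⁻¹ * g z) z := by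
        refine DifferentiableAt.mul (DifferentiableAt.inv (by fun_prop) ?_) (hg z)
        exact pow_ne_zero _ (sub_ne_zero.2 hz)
      refine this.congr_of_eventuallyEq ?_
      filter_upwards [isOpen_ne.mem_nhds hz] with y hy
      rw [Function.update_of_ne hy]
  · intro z
    by_cases hz : z = s
    · subst hz
      have := hke.self_of_nhds
      simpa using this
    · rw [Function.update_of_ne hz, ← mul_assoc, mul_inv_cancel₀, one_mul]
      exact pow_ne_zero _ (sub_ne_zero.2 hz)

lemma iteratedDeriv_vanish_of_mul (T : ℕ) (a : ℂ → ℂ) (h g : ℂ → ℂ) (s : ℂ)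
    (ha : Differentiable ℂ a) (hh : Differentiable ℂ h) (has : a s ≠ 0)
    (hg : ∀ z, g z = a z * h z) (hv : ∀ t < T, iteratedDeriv t g s = 0) :
    ∀ t < T, iteratedDeriv t h s = 0 := by
  have hgd : Differentiable ℂ g := by
    have : g = fun z => a z * h z := funext hg
    rw [this]; exact ha.mul hh
  have h1 := (natCast_le_analyticOrderAt_iff_iteratedDeriv_eq_zero (hgd.analyticAt s)).2 hv
  refine (natCast_le_analyticOrderAt_iff_iteratedDeriv_eq_zero (hh.analyticAt s)).1 ?_
  have : g = a * h := funext hg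
  rw [this, analyticOrderAt_mul (ha.analyticAt s) (hh.analyticAt s),
    (ha.analyticAt s).analyticOrderAt_eq_zero.2 has, zero_add] at h1
  exact h1

lemma entire_div_grid (T : ℕ) (S : ℕ) : ∀ (g : ℂ → ℂ), Differentiable ℂ g →
    (∀ s < S, ∀ t < T, iteratedDeriv t g (s : ℂ) = 0) →
    ∃ h : ℂ → ℂ, Differentiable ℂ h ∧ ∀ z, g z = (∏ s ∈ Finset.range S, (z - (s:ℂ)) ^ T) * h z := by
  induction S with
  | zero => intro g hg _; exact ⟨g, hg, by simp⟩
  | succ S ih =>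
    intro g hg hv
    obtain ⟨h, hh, hgh⟩ := ih g hg (fun s hs => hv s (by omega))
    have hv' := iteratedDeriv_vanish_of_mul T
      (fun z => ∏ s ∈ Finset.range S, (z - (s:ℂ)) ^ T) h g (S : ℂ) (by fun_prop) hh (by
        rw [Finset.prod_ne_zero_iff]
        intro s hs
        refine pow_ne_zero _ (sub_ne_zero.2 ?_)
        rw [Finset.mem_range] at hs
        exact_mod_cast hs.ne') hgh (hv S (by omega))
    obtain ⟨k, hk, hhk⟩ := entire_div_pow T h hh S hv'
    refine ⟨k, hk, fun z => ?_⟩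
    rw [hgh, hhk, Finset.prod_range_succ, mul_assoc]

/-- One-variable Hermite interpolation with remainder estimate. -/
lemma hermite (S T : ℕ) (R r : ℝ) (y : ℂ) (hy : ‖y‖ ≤ r) (hrR : r < R) (hSr : (S : ℝ) ≤ r) :
    ∃ c : Fin S × Fin T → ℂ, ∀ (g : ℂ → ℂ) (M : ℝ), Differentiable ℂ g →
      (∀ z, ‖z‖ = R → ‖g z‖ ≤ M) →
      ‖g y - ∑ i, c i * iteratedDeriv i.2 g ((i.1 : ℕ) : ℂ)‖
        ≤ R / (R - r) * ((r + S) / (R - S)) ^ (S * T) * M := by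
  classical
  have hr0 : 0 ≤ r := (norm_nonneg y).trans hy
  have hR0 : 0 < R := hr0.trans_lt hrR
  set Q : ℂ → ℂ := fun z => ∏ s ∈ Finset.range S, (z - (s:ℂ)) ^ T with hQ
  have hQc : Continuous Q := by fun_prop
  have hQlow : ∀ z : ℂ, ‖z‖ = R → (R - S) ^ (S * T) ≤ ‖Q z‖ := by
    intro z hz
    rw [hQ]; simp only [norm_prod, norm_pow]
    calc (R - S) ^ (S * T) = ∏ s ∈ Finset.range S, (R - S) ^ T := by
          rw [Finset.prod_const, Finset.card_range, ← pow_mul, mul_comm]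
      _ ≤ _ := by
          refine Finset.prod_le_prod (fun _ _ => pow_nonneg (by linarith) _) (fun s hs => ?_)
          refine pow_le_pow_left₀ (by linarith) ?_ _
          have h1 : ‖z‖ - ‖(s:ℂ)‖ ≤ ‖z - s‖ := norm_sub_norm_le _ _
          rw [hz, norm_natCast] at h1
          have : (s:ℝ) ≤ S := by exact_mod_cast (Finset.mem_range.1 hs).le
          linarith
  have hQpos : ∀ z : ℂ, ‖z‖ = R → Q z ≠ 0 := by
    intro z hz h0
    have := hQlow z hz
    rw [h0, norm_zero] at this
    exact absurd this (not_le.2 (pow_pos (by linarith) _))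
  have hQup : ‖Q y‖ ≤ (r + S) ^ (S * T) := by
    rw [hQ]; simp only [norm_prod, norm_pow]
    calc _ ≤ ∏ s ∈ Finset.range S, (r + S) ^ T := by
          refine Finset.prod_le_prod (fun _ _ => by positivity) (fun s hs => ?_)
          refine pow_le_pow_left₀ (by positivity) ?_ _
          have h1 : ‖y - s‖ ≤ ‖y‖ + ‖(s:ℂ)‖ := norm_sub_le _ _
          rw [norm_natCast] at h1
          have : (s:ℝ) ≤ S := by exact_mod_cast (Finset.mem_range.1 hs).le
          linarith
      _ = _ := by rw [Finset.prod_const, Finset.card_range, ← pow_mul, mul_comm]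
  have hyz : ∀ z : ℂ, ‖z‖ = R → z - y ≠ 0 := by
    intro z hz h0
    rw [sub_eq_zero] at h0; subst h0; linarith
  have hint : ∀ g : ℂ → ℂ, Differentiable ℂ g →
      CircleIntegrable (fun z => (z - y)⁻¹ * (g z / Q z)) 0 R := by
    intro g hg
    refine ContinuousOn.circleIntegrable hR0.le ?_
    intro z hz
    have hz' : ‖z‖ = R := by simpa using hz
    refine ContinuousAt.continuousWithinAt ?_
    refine ContinuousAt.mul (ContinuousAt.inv₀ (by fun_prop) (hyz z hz')) ?_
    exact ContinuousAt.div hg.continuous.continuousAt hQc.continuousAt (hQpos z hz')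
  -- the remainder functional
  let E : entireSub →ₗ[ℂ] ℂ :=
    { toFun := fun g => Q y * ((2 * Real.pi * I)⁻¹ * ∮ z in C(0, R), (z - y)⁻¹ * (g.1 z / Q z))
      map_add' := by
        intro f g
        have : (fun z => (z - y)⁻¹ * ((f + g).1 z / Q z)) =
          fun z => (z - y)⁻¹ * (f.1 z / Q z) + (z - y)⁻¹ * (g.1 z / Q z) := by
          funext z; simp [add_div, mul_add]
        rw [this, circleIntegral.integral_add (hint _ f.2) (hint _ g.2)]; ring
      map_smul' := by
        intro c g
        have : (fun z => (z - y)⁻¹ * ((c • g).1 z / Q z)) =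
          fun z => c * ((z - y)⁻¹ * (g.1 z / Q z)) := by
          funext z; simp; ring
        rw [this, circleIntegral.integral_const_mul]; simp; ring }
  let ev : entireSub →ₗ[ℂ] ℂ :=
    { toFun := fun g => g.1 y, map_add' := fun _ _ => rfl, map_smul' := fun _ _ => rfl }
  let L : Fin S × Fin T → (entireSub →ₗ[ℂ] ℂ) := fun i =>
    { toFun := fun g => iteratedDeriv i.2 g.1 ((i.1 : ℕ) : ℂ)
      map_add' := by
        intro f g
        exact iteratedDeriv_add (entire_contDiff f.2 _).contDiffAt (entire_contDiff g.2 _).contDiffAt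
      map_smul' := by
        intro c g
        exact iteratedDeriv_const_smul_field c g.1 }
  have hker : ⨅ i, LinearMap.ker (L i) ≤ LinearMap.ker (ev - E) := by
    intro g hg
    rw [Submodule.mem_iInf] at hg
    have hv : ∀ s < S, ∀ t < T, iteratedDeriv t g.1 (s : ℂ) = 0 := by
      intro s hs t ht
      have := hg (⟨s, hs⟩, ⟨t, ht⟩)
      simpa [L] using this
    obtain ⟨h, hh, hgh⟩ := entire_div_grid T S g.1 g.2 hv
    rw [LinearMap.mem_ker, LinearMap.sub_apply, sub_eq_zero]
    change g.1 y = Q y * ((2 * Real.pi * I)⁻¹ * ∮ z in C(0, R), (z - y)⁻¹ * (g.1 z / Q z))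
    have h1 : (∮ z in C(0, R), (z - y)⁻¹ * (g.1 z / Q z)) = ∮ z in C(0, R), (z - y)⁻¹ • h z := by
      refine circleIntegral.integral_congr hR0.le ?_
      intro z hz
      have hz' : ‖z‖ = R := by simpa using hz
      have : Q z ≠ 0 := hQpos z hz'
      simp only [smul_eq_mul]
      rw [hgh z, mul_div_cancel_left₀ _ this]
    rw [h1]
    have h2 := Complex.two_pi_I_inv_smul_circleIntegral_sub_inv_smul_of_differentiable_on_off_countable
      (f := h) (c := 0) (R := R) (w := y) (s := ∅) Set.countable_empty
      (by simpa using hy.trans_lt hrR) hh.continuous.continuousOn (fun z _ => hh z)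
    rw [smul_eq_mul] at h2
    rw [h2, hgh]
  have hspan := mem_span_of_iInf_ker_le_ker hker
  rw [Submodule.mem_span_range_iff_exists_fun] at hspan
  obtain ⟨c, hc⟩ := hspan
  refine ⟨c, fun g M hg hM => ?_⟩
  have h1 := LinearMap.congr_fun hc ⟨g, hg⟩
  simp only [LinearMap.sum_apply, LinearMap.smul_apply, smul_eq_mul, LinearMap.sub_apply] at h1
  have h2 : g y - ∑ i, c i * iteratedDeriv i.2 g ((i.1 : ℕ) : ℂ) = E ⟨g, hg⟩ := by
    change ∑ i, c i * iteratedDeriv i.2 g ((i.1 : ℕ) : ℂ) = g y - E ⟨g, hg⟩ at h1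
    rw [h1]; ring
  rw [h2]
  change ‖Q y * ((2 * Real.pi * I)⁻¹ * ∮ z in C(0, R), (z - y)⁻¹ * (g z / Q z))‖ ≤ _
  have hM0 : 0 ≤ M := (norm_nonneg _).trans (hM R (by simp [abs_of_pos hR0]))
  have h3 : ‖(2 * Real.pi * I : ℂ)⁻¹ • ∮ z in C(0, R), (z - y)⁻¹ * (g z / Q z)‖
      ≤ R * ((R - r)⁻¹ * (M / (R - S) ^ (S * T))) := by
    refine circleIntegral.norm_two_pi_i_inv_smul_integral_le_of_norm_le_const hR0.le ?_
    intro z hz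
    have hz' : ‖z‖ = R := by simpa using hz
    rw [norm_mul, norm_inv, norm_div]
    have e1 : R - r ≤ ‖z - y‖ := by
      have := norm_sub_norm_le z y
      linarith
    have e2 : 0 < (R - S) ^ (S * T) := pow_pos (by linarith) _
    gcongr
    · exact hM z hz'
    · exact hQlow z hz'
  rw [smul_eq_mul] at h3
  rw [norm_mul]
  calc _ ≤ (r + S) ^ (S * T) * (R * ((R - r)⁻¹ * (M / (R - S) ^ (S * T)))) := by gcongr
    _ = _ := by rw [div_pow]; ring

end BK


set_option linter.unusedSectionVars false

namespace BK
open Complex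

section words
variable {E : Type*} [NormedAddCommGroup E] [NormedSpace ℂ E]

/-- directional derivative -/
noncomputable def dd (v : E) (F : E → ℂ) : E → ℂ := fun x => fderiv ℂ F x v

/-- iterated directional derivatives along a list of directions -/
noncomputable def ddl : List E → (E → ℂ) → E → ℂ
  | [], F => F
  | v :: l, F => ddl l (dd v F)

/-- smoothness -/
abbrev Sm (F : E → ℂ) : Prop := ContDiff ℂ (⊤ : ℕ∞) F

lemma Sm.dd {F : E → ℂ} (hF : Sm F) (v : E) : Sm (dd v F) := by
  have : ContDiff ℂ (⊤ : ℕ∞) (fderiv ℂ F) := (contDiff_infty_iff_fderiv.1 hF).2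
  exact this.clm_apply contDiff_const

lemma Sm.diff {F : E → ℂ} (hF : Sm F) : Differentiable ℂ F :=
  hF.differentiable (by simp)

lemma Sm.ddl (l : List E) : ∀ {F : E → ℂ}, Sm F → Sm (ddl l F) := by
  induction l with
  | nil => intro F hF; exact hF
  | cons v l ih => intro F hF; exact ih (hF.dd v)

lemma dd_add {F G : E → ℂ} (v : E) (hF : Sm F) (hG : Sm G) :
    dd v (fun x => F x + G x) = fun x => dd v F x + dd v G x := by
  funext x
  simp only [dd]
  rw [fderiv_fun_add (hF.diff x) (hG.diff x)]; rfl

lemma dd_const_mul {F : E → ℂ} (v : E) (c : ℂ) (hF : Sm F) :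
    dd v (fun x => c * F x) = fun x => c * dd v F x := by
  funext x
  simp only [dd]
  rw [fderiv_const_mul (hF.diff x)]; rfl

lemma ddl_add (l : List E) : ∀ {F G : E → ℂ}, Sm F → Sm G →
    ddl l (fun x => F x + G x) = fun x => ddl l F x + ddl l G x := by
  induction l with
  | nil => intros; rfl
  | cons v l ih =>
    intro F G hF hG
    simp only [ddl]
    rw [dd_add v hF hG, ih (hF.dd v) (hG.dd v)]

lemma ddl_const_mul (l : List E) (c : ℂ) : ∀ {F : E → ℂ}, Sm F →
    ddl l (fun x => c * F x) = fun x => c * ddl l F x := by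
  induction l with
  | nil => intros; rfl
  | cons v l ih =>
    intro F hF
    simp only [ddl]
    rw [dd_const_mul v c hF, ih (hF.dd v)]

lemma ddl_zero (l : List E) : ddl l (fun _ : E => (0:ℂ)) = fun _ => 0 := by
  have := ddl_const_mul l 0 (F := fun _ : E => (0:ℂ)) contDiff_const
  simpa using this

lemma ddl_sum (l : List E) {ι : Type*} (s : Finset ι) (F : ι → E → ℂ) (hF : ∀ i, Sm (F i)) :
    ddl l (fun x => ∑ i ∈ s, F i x) = fun x => ∑ i ∈ s, ddl l (F i) x := by
  classical
  induction s using Finset.induction_on with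
  | empty => simp [ddl_zero]
  | insert a s ha ih =>
    simp only [Finset.sum_insert ha]
    rw [ddl_add l (hF a) (ContDiff.sum fun i _ => hF i), ih]

/-- words in a spanning set determine all words -/
lemma words_span (V : Set E) (hV : Submodule.span ℂ V = ⊤) (x : E) (m : ℕ) :
    ∀ {F : E → ℂ}, Sm F → (∀ l : List E, l.length = m → (∀ v ∈ l, v ∈ V) → ddl l F x = 0) →
      ∀ l : List E, l.length = m → ddl l F x = 0 := by
  induction m with
  | zero =>
    intro F hF h l hl
    rw [List.length_eq_zero_iff] at hl
    subst hl
    exact h [] rfl (by simp)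
  | succ m ih =>
    intro F hF h l hl
    obtain ⟨v, l, rfl⟩ := List.exists_cons_of_length_eq_add_one hl
    have hl' : l.length = m := by simpa using hl
    refine ih (hF.dd v) ?_ l hl'
    intro l2 hl2 hl2V
    have hv : v ∈ Submodule.span ℂ V := by rw [hV]; trivial
    induction hv using Submodule.span_induction with
    | mem v hv => exact h (v :: l2) (by simp [hl2]) (by simpa using ⟨hv, hl2V⟩)
    | zero =>
      have : dd (0:E) F = fun _ => 0 := by funext y; simp [dd]
      rw [this, ddl_zero]
    | add a b _ _ ha hb =>
      have : dd (a + b) F = fun y => dd a F y + dd b F y := by funext y; simp [dd]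
      rw [this, ddl_add _ (hF.dd a) (hF.dd b)]; beta_reduce; rw [ha (by simp [hl']), hb (by simp [hl']), add_zero]
    | smul c a _ ha =>
      have : dd (c • a) F = fun y => c * dd a F y := by funext y; simp [dd]
      rw [this, ddl_const_mul _ _ (hF.dd a)]; beta_reduce; rw [ha (by simp [hl']), mul_zero]

lemma hasDerivAt_line {F : E → ℂ} (hF : Sm F) (x v : E) (u : ℂ) :
    HasDerivAt (fun u : ℂ => F (x + u • v)) (dd v F (x + u • v)) u := by
  have h1 : HasDerivAt (fun u : ℂ => x + u • v) v u := by
    simpa using ((hasDerivAt_id u).smul_const v).const_add x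
  exact (hF.diff (x + u • v)).hasFDerivAt.comp_hasDerivAt u h1

lemma iteratedDeriv_line (x v : E) (n : ℕ) : ∀ {F : E → ℂ}, Sm F → ∀ u : ℂ,
    iteratedDeriv n (fun u : ℂ => F (x + u • v)) u = ddl (List.replicate n v) F (x + u • v) := by
  induction n with
  | zero => intro F hF u; simp [ddl]
  | succ n ih =>
    intro F hF u
    rw [iteratedDeriv_succ']
    have : deriv (fun u : ℂ => F (x + u • v)) = fun u : ℂ => dd v F (x + u • v) := by
      funext u; exact (hasDerivAt_line hF x v u).deriv
    rw [this, ih (hF.dd v)]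
    rfl

lemma dd_bound {F : E → ℂ} (hF : Sm F) (v x : E) {ρ C M : ℝ} (hρ : 0 < ρ) (hC : 0 < C)
    (hv : ‖v‖ ≤ C)
    (hM : ∀ y, ‖y - x‖ ≤ ρ → ‖F y‖ ≤ M) : ‖dd v F x‖ ≤ C / ρ * M := by
  have h1 := (hasDerivAt_line hF x v 0).deriv
  simp only [zero_smul, add_zero] at h1
  rw [← h1]
  have hd : DiffContOnCl ℂ (fun u : ℂ => F (x + u • v)) (Metric.ball 0 (ρ / C)) :=
    Differentiable.diffContOnCl fun u => (hasDerivAt_line hF x v u).differentiableAt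
  have := Complex.norm_deriv_le_of_forall_mem_sphere_norm_le (c := 0) (div_pos hρ hC) hd (C := M) ?_
  · refine this.trans (le_of_eq ?_)
    field_simp
  · intro z hz
    refine hM _ ?_
    have : ‖z‖ = ρ / C := by simpa using hz
    rw [add_sub_cancel_left, norm_smul, this]
    calc ρ / C * ‖v‖ ≤ ρ / C * C := by gcongr
      _ = ρ := by field_simp

lemma ddl_bound {ρ C M : ℝ} (hρ : 0 < ρ) (hC : 0 < C) (l : List E) :
    ∀ {F : E → ℂ}, Sm F → (∀ v ∈ l, ‖v‖ ≤ C) → ∀ x,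
    (∀ y, ‖y - x‖ ≤ l.length * ρ → ‖F y‖ ≤ M) →
    ‖ddl l F x‖ ≤ (C / ρ) ^ l.length * M := by
  induction l generalizing M with
  | nil => intro F hF _ x h; simpa [ddl] using h x (by simp)
  | cons v l ih =>
    intro F hF hv x h
    have := ih (M := C / ρ * M) (hF.dd v) (fun w hw => hv w (by simp [hw])) x ?_
    · refine this.trans (le_of_eq ?_)
      simp [pow_succ]; ring
    · intro y hy
      refine dd_bound hF v y hρ hC (hv v (by simp)) ?_
      intro z hz
      refine h z ?_
      have : ‖z - x‖ ≤ ‖z - y‖ + ‖y - x‖ := norm_sub_le_norm_sub_add_norm_sub z y x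
      simp only [List.length_cons, Nat.cast_add, Nat.cast_one]
      linarith

lemma dd_comp_affine {E' : Type*} [NormedAddCommGroup E'] [NormedSpace ℂ E']
    (A : E →L[ℂ] E') (b : E') {F : E' → ℂ} (hF : Sm F) (v : E) :
    dd v (fun x => F (A x + b)) = fun x => dd (A v) F (A x + b) := by
  funext x
  have h1 : HasFDerivAt (fun x => A x + b) A x := A.hasFDerivAt.add_const b
  have h2 := (hF.diff (A x + b)).hasFDerivAt.comp x h1
  simp only [dd]
  have h3 : fderiv ℂ (fun x => F (A x + b)) x = _ := h2.fderiv
  rw [h3]; rfl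

lemma Sm.comp_affine {E' : Type*} [NormedAddCommGroup E'] [NormedSpace ℂ E']
    (A : E →L[ℂ] E') (b : E') {F : E' → ℂ} (hF : Sm F) : Sm (fun x => F (A x + b)) :=
  ContDiff.comp hF (A.contDiff.add contDiff_const)

lemma ddl_comp_affine {E' : Type*} [NormedAddCommGroup E'] [NormedSpace ℂ E']
    (A : E →L[ℂ] E') (b : E') (l : List E) : ∀ {F : E' → ℂ}, Sm F →
    ddl l (fun x => F (A x + b)) = fun x => ddl (l.map A) F (A x + b) := by
  induction l with
  | nil => intros; rfl
  | cons v l ih =>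
    intro F hF
    simp only [ddl, List.map_cons]
    rw [dd_comp_affine A b hF v, ih (hF.dd _)]

lemma ddl_append (l₁ l₂ : List E) : ∀ (F : E → ℂ), ddl (l₁ ++ l₂) F = ddl l₂ (ddl l₁ F) := by
  induction l₁ with
  | nil => intro F; rfl
  | cons v l ih => intro F; simp only [List.cons_append, ddl]; rw [ih]

end words

section schwarz
variable {ι : Type*} [Fintype ι] [DecidableEq ι]

/-- setting the coordinate `j` to zero, as a linear map -/
noncomputable def killC (j : ι) : (ι → ℂ) →L[ℂ] (ι → ℂ) :=
  ContinuousLinearMap.pi fun i => if i = j then 0 else ContinuousLinearMap.proj i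

lemma update_eq_killC (j : ι) (x : ι → ℂ) (u : ℂ) :
    Function.update x j u = killC j x + Pi.single j u := by
  funext i
  by_cases h : i = j
  · subst h; simp [killC]
  · simp [killC, h]

lemma update_eq_line (j : ι) (x : ι → ℂ) (u : ℂ) :
    Function.update x j u = killC j x + u • Pi.single j (1:ℂ) := by
  rw [update_eq_killC]; congr 1; funext i
  by_cases h : i = j
  · subst h; simp
  · simp [h]

/-- Schwarz lemma on a cartesian product. -/
lemma schwarz (S T : ℕ) (R r ε : ℝ) (hr : 0 ≤ r) (hrR : r < R) (hSr : (S : ℝ) ≤ r)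
    (hε : R / (R - r) * ((r + S) / (R - S)) ^ (S * T) ≤ ε) (hε1 : ε ≤ 1) (hS : 0 < S)
    (J : Finset ι) : ∀ (n : ℕ) (F : (ι → ℂ) → ℂ) (M : ℝ), Sm F → J.card * T < n →
    (∀ x y : ι → ℂ, (∀ j ∈ J, x j = y j) → F x = F y) →
    (∀ s : ι → ℕ, (∀ i, s i < S) → ∀ l : List (ι → ℂ), l.length < n →
      ddl l F (fun i => (s i : ℂ)) = 0) →
    (∀ x : ι → ℂ, (∀ i, ‖x i‖ ≤ R) → ‖F x‖ ≤ M) →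
    ∀ x : ι → ℂ, (∀ i, ‖x i‖ ≤ r) → ‖F x‖ ≤ (2 ^ J.card - 1) * ε * M := by
  have hR0 : 0 < R := hr.trans_lt hrR
  induction J using Finset.induction_on with
  | empty =>
    intro n F M hF hn hind hv hM x hx
    have h1 : F x = F (fun _ => 0) := hind _ _ (by simp)
    have h2 := hv (fun _ => 0) (fun _ => hS) [] (by simpa using hn)
    simp only [ddl, Nat.cast_zero] at h2
    simp [h1, h2]
  | insert j J hj ih =>
    intro n F M hF hn hind hv hM x hx
    obtain ⟨c, hc⟩ := hermite S T R r (x j) (hx j) hrR hSr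
    rw [Finset.card_insert_of_notMem hj] at hn ⊢
    set e : ι → ℂ := Pi.single j 1 with he
    have hM0 : 0 ≤ M := (norm_nonneg _).trans (hM 0 (fun i => by simpa using hR0.le))
    have hε0 : 0 ≤ ε := le_trans (by
      have : 0 < R - S := by linarith
      have : 0 < R - r := by linarith
      positivity) hε
    -- slices
    have hslice : ∀ (y : ι → ℂ) , (fun u : ℂ => F (Function.update y j u)) =
        fun u : ℂ => F (killC j y + u • e) := by
      intro y; funext u; rw [update_eq_line]
    set B : (ι → ℂ) → ℂ := fun y => ∑ i : Fin S × Fin T, c i *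
      ddl (List.replicate i.2 e) F (killC j y + Pi.single j ((i.1 : ℕ) : ℂ)) with hB
    have hBsm : ∀ i : Fin S × Fin T, Sm (fun y : ι → ℂ =>
        ddl (List.replicate i.2 e) F (killC j y + Pi.single j ((i.1 : ℕ) : ℂ))) := fun i =>
      Sm.comp_affine (killC j) _ (hF.ddl _)
    have hBS : Sm B := by
      refine ContDiff.sum fun i _ => ?_
      exact contDiff_const.mul (hBsm i)
    -- remainder bound for any base point
    have hrem : ∀ y : ι → ℂ, (∀ i, ‖y i‖ ≤ R) → ‖F (Function.update y j (x j)) - B y‖ ≤ ε * M := by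
      intro y hy
      have h1 := hc (fun u : ℂ => F (Function.update y j u)) M ?_ ?_
      · refine le_trans (le_of_eq ?_) (h1.trans (by gcongr))
        congr 2
        rw [hB]
        refine Finset.sum_congr rfl fun i _ => ?_
        rw [hslice, iteratedDeriv_line _ _ _ hF, ← update_eq_line, ← update_eq_killC]
      · rw [hslice]
        exact fun u => (hasDerivAt_line hF _ _ u).differentiableAt
      · intro z hz
        refine hM _ fun i => ?_
        by_cases h : i = j
        · subst h; simp [hz]
        · simp [h, hy i]
    have hBbd : ∀ y : ι → ℂ, (∀ i, ‖y i‖ ≤ R) → ‖B y‖ ≤ 2 * M := by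
      intro y hy
      have h1 := hrem y hy
      have h2 : ‖F (Function.update y j (x j))‖ ≤ M := by
        refine hM _ fun i => ?_
        by_cases h : i = j
        · subst h; simpa using (hx i).trans hrR.le
        · simp [h, hy i]
      have h3 : ‖B y‖ ≤ ‖F (Function.update y j (x j))‖ + ‖F (Function.update y j (x j)) - B y‖ := by
        have := norm_sub_le (F (Function.update y j (x j))) (F (Function.update y j (x j)) - B y)
        simpa using this
      have h4 : ε * M ≤ 1 * M := by gcongr
      linarith
    have h5 := ih (n - T) B (2 * M) hBS (by
        have : (J.card + 1) * T = J.card * T + T := by ring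
        omega) ?_ ?_ hBbd x hx
    · have h6 := hrem x (fun i => (hx i).trans hrR.le)
      rw [Function.update_eq_self] at h6
      have h7 : ‖F x‖ ≤ ‖B x‖ + ‖F x - B x‖ := by
        have := norm_add_le (B x) (F x - B x)
        simpa using this
      rw [pow_succ]
      nlinarith
    · intro y z hyz
      rw [hB]
      refine Finset.sum_congr rfl fun i _ => ?_
      congr 1
      rw [← update_eq_killC, ← update_eq_killC]
      rw [← zero_add (Function.update y j _), ← zero_add (Function.update z j _)]
      -- ddl of an independent function is independent
      have hind' : ∀ w : ι → ℂ, (∀ k ∈ insert j J, w k = 0) → ∀ x, F (x + w) = F x := by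
        intro w hw x
        refine hind _ _ fun k hk => ?_
        simp [hw k hk]
      set w : ι → ℂ := Function.update y j ((i.1:ℕ):ℂ) - Function.update z j ((i.1:ℕ):ℂ) with hw
      have hwz : ∀ k ∈ insert j J, w k = 0 := by
        intro k hk
        rw [hw]
        by_cases h : k = j
        · subst h; simp
        · have : k ∈ J := by simpa [h] using hk
          simp [h, hyz k this]
      have h8 := ddl_comp_affine (ContinuousLinearMap.id ℂ (ι → ℂ)) w (List.replicate i.2 e) hF
      have h9 : (fun x => F ((ContinuousLinearMap.id ℂ (ι → ℂ)) x + w)) = F := by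
        funext x; exact hind' w hwz x
      rw [h9] at h8
      have h10 := congrFun h8 (Function.update z j ((i.1:ℕ):ℂ))
      simp only [ContinuousLinearMap.coe_id', List.map_id, id_eq] at h10
      rw [zero_add, zero_add, h10]
      congr 1
      rw [hw]; abel
    · intro s hs l hl
      rw [hB, ddl_sum l Finset.univ _ (fun i => contDiff_const.mul (hBsm i))]
      refine Finset.sum_eq_zero fun i _ => ?_
      rw [ddl_const_mul l _ (hBsm i), ddl_comp_affine _ _ _ (hF.ddl _)]
      simp only
      rw [← ddl_append, ← update_eq_killC]
      have h11 := hv (Function.update s j i.1) (by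
        intro k
        by_cases h : k = j
        · subst h; simp
        · simp [h, hs k]) (List.replicate i.2 e ++ l.map (killC j)) (by
          simp; have := i.2.2; omega)
      have h12 : (fun k => ((Function.update s j (i.1:ℕ) k : ℕ) : ℂ)) =
          Function.update (fun k => (s k : ℂ)) j ((i.1 : ℕ) : ℂ) := by
        funext k
        by_cases h : k = j
        · subst h; simp
        · simp [h]
      rw [h12] at h11
      rw [h11, mul_zero]

end schwarz
end BK


set_option linter.unusedSectionVars false

namespace BK
open Complex Polynomial

section op
variable {A : Type*} [CommRing A]

/-- the twisted derivation -/
noncomputable def op (d c : A) (P : A[X]) : A[X] := C d * derivative P + C c * P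

/-- iterated twisted derivations -/
noncomputable def opl : List (A × A) → A[X] → A[X]
  | [], P => P
  | v :: l, P => opl l (op v.1 v.2 P)

lemma op_comm (v w : A × A) (P : A[X]) : op v.1 v.2 (op w.1 w.2 P) = op w.1 w.2 (op v.1 v.2 P) := by
  simp only [op, derivative_add, derivative_mul, derivative_C]
  ring

lemma opl_perm {l₁ l₂ : List (A × A)} (h : l₁.Perm l₂) : ∀ P, opl l₁ P = opl l₂ P := by
  induction h with
  | nil => intro P; rfl
  | cons v _ ih => intro P; simp only [opl]; exact ih _
  | swap v w l => intro P; simp only [opl]; rw [op_comm]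
  | trans _ _ h1 h2 => intro P; rw [h1, h2]

lemma op_add (d c : A) (P Q : A[X]) : op d c (P + Q) = op d c P + op d c Q := by
  simp only [op, derivative_add]; ring

lemma op_C_mul (d c a : A) (P : A[X]) : op d c (C a * P) = C a * op d c P := by
  simp only [op, derivative_mul, derivative_C]; ring

lemma opl_add (l : List (A × A)) : ∀ P Q : A[X], opl l (P + Q) = opl l P + opl l Q := by
  induction l with
  | nil => intros; rfl
  | cons v l ih => intro P Q; simp only [opl]; rw [op_add, ih]

lemma opl_C_mul (l : List (A × A)) (a : A) : ∀ P : A[X], opl l (C a * P) = C a * opl l P := by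
  induction l with
  | nil => intros; rfl
  | cons v l ih => intro P; simp only [opl]; rw [op_C_mul, ih]

lemma opl_zero (l : List (A × A)) : opl l (0 : A[X]) = 0 := by
  simpa using opl_C_mul l 0 0

lemma opl_sum (l : List (A × A)) {ι : Type*} (s : Finset ι) (P : ι → A[X]) :
    opl l (∑ i ∈ s, P i) = ∑ i ∈ s, opl l (P i) := by
  classical
  induction s using Finset.induction_on with
  | empty => simp [opl_zero]
  | insert a s ha ih => rw [Finset.sum_insert ha, Finset.sum_insert ha, opl_add, ih]

lemma opl_map {B : Type*} [CommRing B] (f : A →+* B) (l : List (A × A)) : ∀ P : A[X],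
    (opl l P).map f = opl (l.map fun v => (f v.1, f v.2)) (P.map f) := by
  induction l with
  | nil => intros; rfl
  | cons v l ih =>
    intro P
    simp only [opl, List.map_cons]
    rw [ih]
    congr 1
    simp [op]

end op

section bound

/-- coefficient bound -/
def Bd (N : ℕ) (b : ℝ) (P : ℂ[X]) : Prop :=
  P.natDegree ≤ N ∧ ∑ i ∈ Finset.range (N + 1), ‖P.coeff i‖ ≤ b

lemma Bd_X_pow {N a : ℕ} (h : a ≤ N) : Bd N 1 (X ^ a : ℂ[X]) := by
  refine ⟨by simpa using h, ?_⟩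
  rw [Finset.sum_eq_single a]
  · simp
  · intro b _ hb; simp [coeff_X_pow, hb]
  · intro h'; simp at h'; omega

lemma Bd_op {N : ℕ} {b c₀ : ℝ} {P : ℂ[X]} (h : Bd N b P) {d c : ℂ} (hd : ‖d‖ ≤ 1) (hc : ‖c‖ ≤ c₀) :
    Bd N ((N + c₀) * b) (op d c P) := by
  have hb : 0 ≤ b := (Finset.sum_nonneg fun _ _ => norm_nonneg _).trans h.2
  constructor
  · unfold op
    refine (natDegree_add_le _ _).trans (max_le ?_ ?_)
    · exact (natDegree_C_mul_le _ _).trans ((natDegree_derivative_le P).trans (by have := h.1; omega))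
    · exact (natDegree_C_mul_le _ _).trans h.1
  · have h1 : ∀ i, ‖(op d c P).coeff i‖ ≤ ‖P.coeff (i+1)‖ * (i + 1) + c₀ * ‖P.coeff i‖ := by
      intro i
      simp only [op, coeff_add, coeff_C_mul, coeff_derivative]
      refine (norm_add_le _ _).trans ?_
      rw [norm_mul, norm_mul, norm_mul]
      have e : ‖((i:ℂ) + 1)‖ = i + 1 := by
        rw [← Nat.cast_succ, norm_natCast]; push_cast; ring
      rw [e]
      refine add_le_add ?_ (mul_le_mul_of_nonneg_right hc (norm_nonneg _))
      exact mul_le_of_le_one_left (by positivity) hd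
    calc _ ≤ ∑ i ∈ Finset.range (N + 1), (‖P.coeff (i+1)‖ * (i + 1) + c₀ * ‖P.coeff i‖) :=
          Finset.sum_le_sum fun i _ => h1 i
      _ = ∑ i ∈ Finset.range (N + 1), ‖P.coeff (i+1)‖ * (i + 1)
          + c₀ * ∑ i ∈ Finset.range (N + 1), ‖P.coeff i‖ := by
          rw [Finset.sum_add_distrib, Finset.mul_sum]
      _ ≤ N * b + c₀ * b := by
          have hc0 : 0 ≤ c₀ := (norm_nonneg _).trans hc
          refine add_le_add ?_ (mul_le_mul_of_nonneg_left h.2 hc0)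
          rw [Finset.sum_range_succ, coeff_eq_zero_of_natDegree_lt (by have := h.1; omega)]
          simp only [norm_zero, zero_mul, add_zero]
          calc _ ≤ ∑ i ∈ Finset.range N, ‖P.coeff (i+1)‖ * N := by
                refine Finset.sum_le_sum fun i hi => ?_
                have : (i:ℝ) + 1 ≤ N := by exact_mod_cast Finset.mem_range.1 hi
                gcongr
            _ = N * ∑ i ∈ Finset.range N, ‖P.coeff (i+1)‖ := by rw [← Finset.sum_mul, mul_comm]
            _ ≤ N * b := by
                gcongr
                refine le_trans ?_ h.2
                rw [Finset.sum_range_succ']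
                linarith [norm_nonneg (P.coeff 0)]
      _ = _ := by ring

lemma Bd_opl {N : ℕ} {c₀ : ℝ} (l : List (ℂ × ℂ)) : ∀ {b : ℝ} {P : ℂ[X]}, Bd N b P →
    (∀ v ∈ l, ‖v.1‖ ≤ 1 ∧ ‖v.2‖ ≤ c₀) → Bd N ((N + c₀) ^ l.length * b) (opl l P) := by
  induction l with
  | nil => intro b P h _; simpa [opl] using h
  | cons v l ih =>
    intro b P h hv
    have h1 := hv v (by simp)
    have := ih (Bd_op h h1.1 h1.2) (fun w hw => hv w (by simp [hw]))
    simp only [opl, List.length_cons, pow_succ]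
    convert this using 1
    ring

lemma Bd_eval {N : ℕ} {b : ℝ} {P : ℂ[X]} (h : Bd N b P) {z : ℂ} {Z : ℝ} (hZ : 1 ≤ Z) (hz : ‖z‖ ≤ Z) :
    ‖P.eval z‖ ≤ b * Z ^ N := by
  rw [eval_eq_sum_range' (Nat.lt_succ_of_le h.1)]
  calc _ ≤ ∑ i ∈ Finset.range (N + 1), ‖P.coeff i * z ^ i‖ := norm_sum_le _ _
    _ ≤ ∑ i ∈ Finset.range (N + 1), ‖P.coeff i‖ * Z ^ N := by
        refine Finset.sum_le_sum fun i hi => ?_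
        rw [norm_mul, norm_pow]
        gcongr
        calc ‖z‖ ^ i ≤ Z ^ i := by gcongr
          _ ≤ Z ^ N := pow_le_pow_right₀ hZ (by simpa [Nat.lt_succ_iff] using hi)
    _ ≤ _ := by rw [← Finset.sum_mul]; gcongr; exact h.2

end bound

section exppoly

lemma exppoly_indep {κ : Type*} [DecidableEq κ] (c : κ → ℂ) (hc : Function.Injective c)
    (s : Finset κ) : ∀ P : κ → ℂ[X],
    (∀ u : ℂ, ∑ k ∈ s, (P k).eval u * exp (c k * u) = 0) → ∀ k ∈ s, P k = 0 := by
  induction s using Finset.induction_on with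
  | empty => simp
  | insert a s ha ih =>
    have key : ∀ N : ℕ, ∀ P : κ → ℂ[X], (P a).degree < N →
      (∀ u : ℂ, ∑ k ∈ insert a s, (P k).eval u * exp (c k * u) = 0) →
      ∀ k ∈ insert a s, P k = 0 := by
      intro N
      induction N with
      | zero =>
        intro P hP h
        have hPa : P a = 0 := by
          rw [← degree_eq_bot]
          exact Nat.WithBot.lt_zero_iff.1 (by simpa using hP)
        have := ih P (by
          intro u
          have := h u
          rw [Finset.sum_insert ha, hPa] at this
          simpa using this)
        intro k hk
        rw [Finset.mem_insert] at hk
        rcases hk with rfl | hk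
        · exact hPa
        · exact this k hk
      | succ N ihN =>
        intro P hP h
        have hder : ∀ u : ℂ, ∑ k ∈ insert a s,
            ((derivative (P k) + C (c k - c a) * P k)).eval u * exp (c k * u) = 0 := by
          intro u
          have h1 : HasDerivAt (fun u : ℂ => ∑ k ∈ insert a s, (P k).eval u * exp (c k * u))
              (∑ k ∈ insert a s, ((derivative (P k)).eval u * exp (c k * u)
                + (P k).eval u * (exp (c k * u) * (c k * 1)))) u := by
            refine HasDerivAt.fun_sum fun k _ => ?_
            exact ((P k).hasDerivAt u).mul (((hasDerivAt_id u).const_mul (c k)).cexp)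
          have h2 : (fun u : ℂ => ∑ k ∈ insert a s, (P k).eval u * exp (c k * u)) = fun _ => 0 :=
            funext h
          rw [h2] at h1
          have h3 := h1.unique (hasDerivAt_const u 0)
          have h4 := h u
          have : ∑ k ∈ insert a s,
            ((derivative (P k) + C (c k - c a) * P k)).eval u * exp (c k * u)
             = ∑ k ∈ insert a s, ((derivative (P k)).eval u * exp (c k * u)
                + (P k).eval u * (exp (c k * u) * (c k * 1))) - c a *
                ∑ k ∈ insert a s, (P k).eval u * exp (c k * u) := by
            rw [Finset.mul_sum, ← Finset.sum_sub_distrib]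
            refine Finset.sum_congr rfl fun k _ => ?_
            simp; ring
          rw [this, h3, h4]; simp
        have h5 := ihN (fun k => derivative (P k) + C (c k - c a) * P k) (by
          simp only [sub_self, C_0, zero_mul, add_zero]
          by_cases h0 : P a = 0
          · simp [h0, WithBot.bot_lt_coe]
          · have := degree_derivative_lt h0
            rw [degree_eq_natDegree h0] at this hP
            have h6 : (P a).natDegree ≤ N := by
              have : (P a).natDegree < N + 1 := by exact_mod_cast hP
              omega
            exact this.trans_le (by exact_mod_cast h6)) hder
        have hs0 : ∀ k ∈ s, P k = 0 := by
          intro k hk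
          have hka : c k - c a ≠ 0 := sub_ne_zero.2 fun hh => ha (hc hh ▸ hk)
          by_contra h0
          have h6 := h5 k (Finset.mem_insert_of_mem hk)
          have h7 := degree_derivative_lt h0
          have h8 : (C (c k - c a) * P k).degree = (P k).degree := degree_C_mul hka
          have h9 : C (c k - c a) * P k = - derivative (P k) := by
            rw [eq_neg_iff_add_eq_zero, add_comm]; exact h6
          rw [h9, degree_neg] at h8
          exact absurd h8 h7.ne
        intro k hk
        rw [Finset.mem_insert] at hk
        rcases hk with rfl | hk
        · ext1
          refine Polynomial.ext_iff.1 (Polynomial.funext fun u => ?_) _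
          have := h u
          rw [Finset.sum_insert ha, Finset.sum_eq_zero (fun j hj => by rw [hs0 j hj]; simp),
            add_zero] at this
          simpa [exp_ne_zero] using this
        · exact hs0 k hk
    intro P h
    exact key ((P a).natDegree + 1) P
      (lt_of_le_of_lt degree_le_natDegree (by exact_mod_cast Nat.lt_succ_self _)) h

variable {E : Type*} [NormedAddCommGroup E] [NormedSpace ℂ E]

/-- exponential polynomial term -/
noncomputable def expP (ℓ₀ ℓ : E →L[ℂ] ℂ) (P : ℂ[X]) (x : E) : ℂ := P.eval (ℓ₀ x) * exp (ℓ x)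

lemma expP_sm (ℓ₀ ℓ : E →L[ℂ] ℂ) (P : ℂ[X]) : Sm (expP ℓ₀ ℓ P) := by
  unfold expP
  refine ContDiff.mul ?_ ?_
  · have : (fun x => P.eval (ℓ₀ x)) = (fun z : ℂ => P.eval z) ∘ ℓ₀ := rfl
    rw [this]
    exact ContDiff.comp (P.differentiable.contDiff) ℓ₀.contDiff
  · exact ℓ.contDiff.cexp

lemma dd_expP (ℓ₀ ℓ : E →L[ℂ] ℂ) (P : ℂ[X]) (v : E) :
    dd v (expP ℓ₀ ℓ P) = expP ℓ₀ ℓ (op (ℓ₀ v) (ℓ v) P) := by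
  funext x
  have h1 := hasDerivAt_line (expP_sm ℓ₀ ℓ P) x v 0
  rw [zero_smul, add_zero] at h1
  refine h1.unique ?_
  have h2 : HasDerivAt (fun u : ℂ => ℓ₀ (x + u • v)) (ℓ₀ v) 0 := by
    simpa using ((hasDerivAt_id (0:ℂ)).mul_const (ℓ₀ v)).const_add (ℓ₀ x)
  have h3 : HasDerivAt (fun u : ℂ => ℓ (x + u • v)) (ℓ v) 0 := by
    simpa using ((hasDerivAt_id (0:ℂ)).mul_const (ℓ v)).const_add (ℓ x)
  have h4 := ((P.hasDerivAt (ℓ₀ (x + (0:ℂ) • v))).comp (0:ℂ) h2).mul h3.cexp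
  have e : eval (ℓ₀ (x + (0:ℂ) • v)) (derivative P) * ℓ₀ v * cexp (ℓ (x + (0:ℂ) • v)) +
      ((fun x => eval x P) ∘ fun u : ℂ => ℓ₀ (x + u • v)) 0 * (cexp (ℓ (x + (0:ℂ) • v)) * ℓ v)
      = expP ℓ₀ ℓ (op (ℓ₀ v) (ℓ v) P) x := by
    simp [expP, op]; ring
  rw [e] at h4
  exact h4

lemma ddl_expP (ℓ₀ ℓ : E →L[ℂ] ℂ) (l : List E) : ∀ (P : ℂ[X]),
    ddl l (expP ℓ₀ ℓ P) = expP ℓ₀ ℓ (opl (l.map fun v => (ℓ₀ v, ℓ v)) P) := by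
  induction l with
  | nil => intro P; rfl
  | cons v l ih => intro P; simp only [ddl, opl, List.map_cons]; rw [dd_expP, ih]

lemma expP_sum_nonvanish {κ : Type*} [Fintype κ] [DecidableEq κ] (ℓ₀ : E →L[ℂ] ℂ)
    (ℓ : κ → E →L[ℂ] ℂ) (P : κ → ℂ[X]) (w : E) (h0 : ℓ₀ w = 1)
    (hw : Function.Injective fun k => ℓ k w)
    (hv : ∀ l : List E, ddl l (fun x => ∑ k, expP ℓ₀ (ℓ k) (P k) x) 0 = 0) :
    ∀ k, P k = 0 := by
  intro k
  set F : E → ℂ := fun x => ∑ k, expP ℓ₀ (ℓ k) (P k) x with hF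
  have hFs : Sm F := ContDiff.sum fun i _ => expP_sm _ _ _
  have hg : Differentiable ℂ (fun u : ℂ => F (0 + u • w)) := fun u =>
    (hasDerivAt_line hFs 0 w u).differentiableAt
  have hz : ∀ u : ℂ, F (0 + u • w) = 0 := by
    intro u
    have h1 := Complex.taylorSeries_eq_of_entire' 0 u hg
    rw [← h1]
    simp only [iteratedDeriv_line 0 w _ hFs]
    simp [hv]
  refine exppoly_indep (fun k => ℓ k w) hw Finset.univ P ?_ k (Finset.mem_univ _)
  intro u
  have := hz u
  simp only [hF, expP, zero_add, map_smul, h0, smul_eq_mul, mul_one] at this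
  rw [← this]
  refine Finset.sum_congr rfl fun k _ => ?_
  rw [mul_comm u]

end exppoly
end BK

namespace BK
open Real

set_option maxHeartbeats 2000000 in
lemma numerics (c D d : ℕ) (hc : 1 ≤ c) (hD : 1 ≤ D) : ∃ S M : ℕ, 0 < S ∧ 0 < M ∧ ∀ n : ℕ, M^D ≤ n →
    ∃ R T'' : ℕ, S < R ∧ D * T'' < n ∧ ∀ (T L0 L : ℕ) (A X B ε : ℝ),
      T = M^D → L0 = 2*T → L = S*M^(D-1) →
      A = rexp (c*L*S) * (L0+c*L)^(D*T) * (c*S)^L0 →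
      X = c*(c*(L^D*L0)*A) →
      B = L^D*(rexp (c*L*S)*((L0+c*L)^n*(L0*X)*(c*S)^L0)) →
      ε = (R:ℝ)/(R-S)*(((S:ℝ)+S)/(R-S))^(S*T'') →
      ε ≤ 1 ∧ rexp (c*L*S)*((c*n)^n*(2^D*ε*(L^D*((L0*X)*(c*R)^L0*rexp (c*L*R))))) * B^(d-1) < 1 := by
  -- exponents
  obtain ⟨kA, hkA⟩ : ∃ k : ℕ, k = c + ((2*D+2)*D) + 4 := ⟨_, rfl⟩
  obtain ⟨kX, hkX⟩ : ∃ k : ℕ, k = 2 + (2*D*D+ (2*D+1)) + kA := ⟨_, rfl⟩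
  obtain ⟨kB, hkB⟩ : ∃ k : ℕ, k = 2*D*D + c + (2*D+2) + (2*D+1) + kX + 4 := ⟨_, rfl⟩
  obtain ⟨k, hk⟩ : ∃ k : ℕ, k = c + (2*D+1) + (D + 2 + 2*D*D + (2*D+1) + kX + 4 + c) + kB*(d-1) := ⟨_, rfl⟩
  obtain ⟨S, hS⟩ : ∃ S : ℕ, S = 4*D*(k+1) := ⟨_, rfl⟩
  obtain ⟨M, hM⟩ : ∃ M : ℕ, M = 4*S*(4*S) + 4*S + (c+3) + 2*D + S*S + ⌈rexp S⌉₊ := ⟨_, rfl⟩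
  have hS0 : 0 < S := by rw [hS]; positivity
  refine ⟨S, M, hS0, by omega, ?_⟩
  intro n hn
  obtain ⟨R, hR1, hR2⟩ : ∃ R : ℕ, R^D ≤ n ∧ n < (R+1)^D := by
    have hex : ∃ r : ℕ, n < (r+1)^D := ⟨n, by
      calc n < n+1 := by omega
        _ ≤ (n+1)^D := Nat.le_self_pow (by omega) _⟩
    refine ⟨Nat.find hex, ?_, Nat.find_spec hex⟩
    rcases Nat.eq_zero_or_pos (Nat.find hex) with h | h
    · rw [h, zero_pow (by omega)]; omega
    · have := Nat.find_min hex (m := Nat.find hex - 1) (by omega)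
      rw [Nat.sub_add_cancel h] at this
      omega
  have hMR : M ≤ R := by
    have : M^D < (R+1)^D := lt_of_le_of_lt hn hR2
    have := lt_of_pow_lt_pow_left₀ D (by positivity) this
    omega
  have hRn : R ≤ n := (Nat.le_self_pow (by omega) _).trans hR1
  have h4S : 4*S*(4*S) ≤ R := by omega
  have hSR : S*S ≤ R := by omega
  have hSR4 : 4*S ≤ R := by omega
  have hR3 : 3 ≤ R := by omega
  have hcR : c ≤ R := by omega
  have hcR2 : c + 2 ≤ R := by omega
  have h2Dn : 2*D ≤ n := by omega
  have hexpR : rexp S ≤ R := by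
    have : ⌈rexp S⌉₊ ≤ R := by omega
    exact (Nat.le_ceil _).trans (by exact_mod_cast this)
  refine ⟨R, (n-1)/D, by omega, ?_, ?_⟩
  · have := Nat.mul_div_le (n-1) D; omega
  intro T L0 L A X B ε hT hL0 hL hA hX hB hε
  have hTn : T ≤ n := by omega
  have hLn : L * R ≤ S * n := by
    rw [hL]
    calc S*M^(D-1)*R ≤ S*R^(D-1)*R := by gcongr
      _ = S * R^D := by rw [mul_assoc, ← pow_succ, Nat.sub_add_cancel hD]
      _ ≤ S * n := by gcongr
  have hLS : L * S ≤ S * n := le_trans (by gcongr; omega) hLn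
  have hLn' : L ≤ n := by
    have : L * R ≤ n * R := by
      rw [mul_comm n]
      exact hLn.trans (Nat.mul_le_mul_right _ (by omega))
    exact Nat.le_of_mul_le_mul_right this (by omega)
  have hnR : n ≤ R^(2*D) := by
    rw [pow_mul]
    refine hR2.le.trans (Nat.pow_le_pow_left (by rw [sq]; exact (show R + 1 ≤ 3 * R by omega).trans (Nat.mul_le_mul_right _ hR3)) _)
  have hn1 : 1 ≤ n := by omega
  -- real versions
  obtain ⟨Q, hQ⟩ : ∃ Q : ℝ, Q = (R:ℝ)^n := ⟨_, rfl⟩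
  have hR1' : (1:ℝ) ≤ R := by exact_mod_cast (by omega : 1 ≤ R)
  have hRQ : (R:ℝ) ≤ Q := by rw [hQ]; exact le_self_pow₀ hR1' (by omega)
  have hQ3 : (3:ℝ) ≤ Q := le_trans (by exact_mod_cast hR3) hRQ
  have hQ1 : (1:ℝ) ≤ Q := by linarith
  have hnR' : (n:ℝ) ≤ (R:ℝ)^(2*D) := by exact_mod_cast hnR
  have hnQ : (n:ℝ) ≤ Q^(2*D) := hnR'.trans (by gcongr)
  have hexp : ∀ Y : ℕ, L * Y ≤ S * n → rexp (c*L*Y) ≤ Q^c := by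
    intro Y hY
    have : (c:ℝ)*L*Y ≤ (n*c:ℕ)*S := by
      have : ((L*Y:ℕ):ℝ) ≤ ((S*n:ℕ):ℝ) := by exact_mod_cast hY
      push_cast at this ⊢
      have hc' : (0:ℝ) ≤ c := by positivity
      calc (c:ℝ)*L*Y = c*(L*Y) := by ring
        _ ≤ c*(S*n) := mul_le_mul_of_nonneg_left this hc'
        _ = _ := by ring
    refine (Real.exp_le_exp.2 this).trans ?_
    rw [Real.exp_nat_mul, hQ, ← pow_mul]
    exact pow_le_pow_left₀ (Real.exp_pos _).le hexpR _
  have h0LcL : ((L0:ℝ)+c*L) ≤ (R:ℝ)^(2*D+1) := by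
    have h1 : (L0:ℝ) ≤ 2*n := by rw [hL0]; push_cast; have : (T:ℝ) ≤ n := by exact_mod_cast hTn
                                 linarith
    have h2 : (L:ℝ) ≤ n := by exact_mod_cast hLn'
    have h3 : (c:ℝ)+2 ≤ R := by exact_mod_cast hcR2
    have hc' : (0:ℝ) ≤ c := by positivity
    calc ((L0:ℝ)+c*L) ≤ (c+2)*n := by
          have := mul_le_mul_of_nonneg_left h2 hc'
          rw [add_mul]; linarith
      _ ≤ R * (R:ℝ)^(2*D) := by gcongr
      _ = _ := by ring
  have h0LcL' : ∀ m j : ℕ, m ≤ j*n → ((L0:ℝ)+c*L)^m ≤ Q^((2*D+1)*j) := by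
    intro m j hm
    calc ((L0:ℝ)+c*L)^m ≤ ((R:ℝ)^(2*D+1))^m := by gcongr
      _ ≤ ((R:ℝ)^(2*D+1))^(j*n) := pow_le_pow_right₀ (one_le_pow₀ hR1') hm
      _ = _ := by rw [hQ]; ring
  have hcY : ∀ Y : ℕ, Y ≤ R → ((c:ℝ)*Y)^L0 ≤ Q^4 := by
    intro Y hY
    have hY' : (Y:ℝ) ≤ R := by exact_mod_cast hY
    have hc' : (c:ℝ) ≤ R := by exact_mod_cast hcR
    calc ((c:ℝ)*Y)^L0 ≤ ((R:ℝ)^2)^L0 := by rw [sq]; gcongr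
      _ ≤ ((R:ℝ)^2)^(2*n) := pow_le_pow_right₀ (one_le_pow₀ hR1') (by omega)
      _ = _ := by rw [hQ]; ring
  have hLD : ((L:ℝ))^D ≤ Q^(2*D*D) := by
    have h2 : (L:ℝ) ≤ n := by exact_mod_cast hLn'
    rw [pow_mul]; gcongr; exact h2.trans hnQ
  have hL0Q : (L0:ℝ) ≤ Q^(2*D+1) := by
    have h1 : (L0:ℝ) ≤ 2*n := by rw [hL0]; push_cast; have : (T:ℝ) ≤ n := by exact_mod_cast hTn
                                 linarith
    calc (L0:ℝ) ≤ 2*n := h1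
      _ ≤ Q * Q^(2*D) := by gcongr; linarith
      _ = _ := by ring
  have hcQ : (c:ℝ) ≤ Q := le_trans (by exact_mod_cast hcR) hRQ
  have hA0 : 0 ≤ A := by rw [hA]; positivity
  have hAQ : A ≤ Q^kA := by
    rw [hA, hkA]
    calc _ ≤ Q^c * Q^((2*D+1)*D) * Q^4 := by
            gcongr
            · exact hexp S hLS
            · exact h0LcL' _ _ (by gcongr)
            · exact hcY S (by omega)
      _ = Q^(c + (2*D+1)*D + 4) := by ring
      _ ≤ _ := by (gcongr; first | exact hQ1 | omega)
  have hX0 : 0 ≤ X := by rw [hX]; positivity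
  have hXQ : X ≤ Q^kX := by
    rw [hX, hkX]
    calc _ ≤ Q*(Q*(Q^(2*D*D)*Q^(2*D+1))*Q^kA) := by gcongr
      _ = _ := by ring
  have hB0 : 0 ≤ B := by rw [hB]; positivity
  have hBQ : B ≤ Q^kB := by
    rw [hB, hkB]
    calc _ ≤ Q^(2*D*D)*(Q^c*(Q^((2*D+1)*1)*(Q^(2*D+1)*Q^kX)*Q^4)) := by
            gcongr
            · exact hexp S hLS
            · exact h0LcL' _ _ (by omega)
            · exact hcY S (by omega)
      _ = Q^(2*D*D + c + (2*D+1) + (2*D+1) + kX + 4) := by ring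
      _ ≤ _ := by (gcongr; first | exact hQ1 | omega)
  have hSRr : (4:ℝ)*S ≤ R := by exact_mod_cast hSR4
  have hS0r : (0:ℝ) < S := by exact_mod_cast hS0
  have hε0 : 0 ≤ ε := by
    rw [hε]
    have : (0:ℝ) < R - S := by linarith
    positivity
  have hratio : (R:ℝ)/(R-S) ≤ 2 := by
    have : (0:ℝ) < R - S := by linarith
    rw [div_le_iff₀ this]; linarith
  have hεQ : ε * Q^(k+1) ≤ 2 := by
    rw [hε]
    have h0 : (0:ℝ) < R - S := by linarith
    have h1 : ((S:ℝ)+S)/(R-S) ≤ 4*S/R := by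
      rw [div_le_div_iff₀ h0 (by linarith)]
      have : 0 ≤ (S:ℝ) * (2*R - 4*S) := mul_nonneg hS0r.le (by linarith)
      linear_combination this
    have h2 : (4*S/R:ℝ)^2 ≤ 1/R := by
      have : (4:ℝ)*S*(4*S) ≤ R := by exact_mod_cast h4S
      rw [div_pow, div_le_div_iff₀ (by positivity) (by positivity)]
      have := mul_le_mul_of_nonneg_right this (show (0:ℝ) ≤ R by positivity)
      linear_combination this
    have h3 : 2*((k+1)*n) ≤ S*((n-1)/D) := by
      have h5 : n ≤ 2*(D*((n-1)/D)) := by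
        have := Nat.div_add_mod (n-1) D
        have := Nat.mod_lt (n-1) (show D > 0 by omega)
        omega
      rw [hS]
      calc 2*((k+1)*n) ≤ 2*((k+1)*(2*(D*((n-1)/D)))) := by gcongr
        _ = _ := by ring
    have h4 : (4*S/R:ℝ) ≤ 1 := by rw [div_le_one (by linarith)]; exact hSRr
    have h6 : (((S:ℝ)+S)/(R-S))^(S*((n-1)/D)) ≤ (1/R:ℝ)^((k+1)*n) := by
      calc _ ≤ (4*S/R:ℝ)^(S*((n-1)/D)) := by gcongr
        _ ≤ (4*S/R:ℝ)^(2*((k+1)*n)) := pow_le_pow_of_le_one (by positivity) h4 h3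
        _ ≤ _ := by rw [pow_mul]; gcongr
    calc _ ≤ 2 * (1/R:ℝ)^((k+1)*n) * Q^(k+1) := by gcongr
      _ = 2 := by
        rw [hQ, ← pow_mul, mul_comm n, mul_assoc, ← mul_pow, one_div, inv_mul_cancel₀ (by positivity), one_pow,
          mul_one]
  have hcn : ((c:ℝ)*n)^n ≤ Q^(2*D+1) := by
    have hc' : (c:ℝ) ≤ R := by exact_mod_cast hcR
    calc ((c:ℝ)*n)^n ≤ (R*(R:ℝ)^(2*D))^n := by gcongr
      _ = _ := by rw [hQ]; ring
  have hQk : (1:ℝ) ≤ Q^k := one_le_pow₀ hQ1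
  have hεlt : ε * Q^k < 1 := by
    have : ε * Q^k * 3 ≤ ε * Q^(k+1) := by
      rw [pow_succ, ← mul_assoc]; gcongr
    linarith
  refine ⟨?_, ?_⟩
  · exact (le_mul_of_one_le_right hε0 hQk).trans hεlt.le
  · have h2D : (2:ℝ)^D ≤ Q^D := by gcongr; linarith
    calc _ ≤ Q^c*(Q^(2*D+1)*(Q^D*ε*(Q^(2*D*D)*((Q^(2*D+1)*Q^kX)*Q^4*Q^c)))) * (Q^kB)^(d-1) := by
            gcongr
            · exact hexp S hLS
            · exact hcY R le_rfl
            · exact hexp R hLn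
      _ = ε * Q^(c + (2*D+1) + (D + 2*D*D + (2*D+1) + kX + 4 + c) + kB*(d-1)) := by ring
      _ ≤ ε * Q^k := by (gcongr; first | exact hQ1 | omega)
      _ < 1 := hεlt

end BK

namespace BK
open NumberField Matrix

lemma house_le_iff {K : Type*} [Field K] [NumberField K] {x : K} {B : ℝ} :
    house x ≤ B ↔ ∀ ψ : K →+* ℂ, ‖ψ x‖ ≤ B := by
  constructor
  · intro h ψ; exact (norm_embedding_le_house x ψ).trans h
  · intro h
    have hB : 0 ≤ B := (norm_nonneg _).trans (h (Classical.arbitrary _))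
    rw [house, pi_norm_le_iff_of_nonneg hB]
    intro ψ; exact h ψ

lemma siegel (K : Type*) [Field K] [NumberField K] : ∃ c : ℕ, 1 ≤ c ∧
    ∀ (α β : Type) [Fintype α] [Fintype β] (p : ℕ), 0 < p → Fintype.card α = p →
    Fintype.card β = 2 * p → ∀ (a : Matrix α β (𝓞 K)) (A : ℝ), 0 ≤ A →
    1 ≤ A → (∀ k l, ∀ ψ : K →+* ℂ, ‖ψ (a k l : K)‖ ≤ A) →
    ∃ ξ : β → 𝓞 K, ξ ≠ 0 ∧ a *ᵥ ξ = 0 ∧ ∀ l, ∀ ψ : K →+* ℂ, ‖ψ (ξ l : K)‖ ≤ c * (c * (2*p) * A) := by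
  classical
  obtain ⟨c₁, hc₁⟩ : ∃ c₁ : ℝ, ∀ (α β : Type) [Fintype α] [Fintype β] (p : ℕ), 0 < p → Fintype.card α = p →
    Fintype.card β = 2 * p → ∀ (a : Matrix α β (𝓞 K)), a ≠ 0 → ∀ (A : ℝ), 0 ≤ A →
     (∀ k l, ∀ ψ : K →+* ℂ, ‖ψ (a k l : K)‖ ≤ A) →
    ∃ ξ : β → 𝓞 K, ξ ≠ 0 ∧ a *ᵥ ξ = 0 ∧ ∀ l, house (ξ l : K) ≤ c₁ * ((c₁ * (2*p:ℕ) * A) ^ ((p:ℝ)/((2*p:ℕ) - p))) := by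
    refine ⟨?_, fun α β _ _ p hp hα hβ a ha A hA habs => ?_⟩
    rotate_left
    exact house.exists_ne_zero_int_vec_house_le K a ha hp (by omega) hβ
      (fun k l => house_le_iff.2 (habs k l)) hα
  refine ⟨⌈|c₁|⌉₊ + 1, by omega, ?_⟩
  intro α β _ _ p hp hα hβ a A hA hA1 habs
  have hc0 : |c₁| ≤ ((⌈|c₁|⌉₊ + 1 : ℕ):ℝ) := by push_cast; have := Nat.le_ceil |c₁|; linarith
  have hp' : (1:ℝ) ≤ p := by exact_mod_cast hp
  by_cases ha : a = 0
  · refine ⟨fun _ => 1, ?_, by simp [ha], ?_⟩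
    · have : Nonempty β := Fintype.card_pos_iff.1 (by omega)
      intro h; have := congrFun h (Classical.arbitrary β); simp at this
    · intro l ψ
      simp only [map_one, norm_one]
      have h1 : (1:ℝ) ≤ ((⌈|c₁|⌉₊ + 1 : ℕ):ℝ) := by exact_mod_cast (by omega)
      have h2 : (1:ℝ) ≤ ((⌈|c₁|⌉₊ + 1 : ℕ):ℝ) * (2*p) * A :=
        one_le_mul_of_one_le_of_one_le (one_le_mul_of_one_le_of_one_le h1 (by linarith)) hA1
      exact one_le_mul_of_one_le_of_one_le h1 h2
  · obtain ⟨ξ, h1, h2, h3⟩ := hc₁ α β p hp hα hβ a ha A hA habs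
    refine ⟨ξ, h1, h2, fun l => house_le_iff.1 ((h3 l).trans ?_)⟩
    have : (p:ℝ)/((2*p:ℕ) - p) = 1 := by
      push_cast; rw [div_eq_one_iff_eq (by linarith)]; ring
    rw [this, Real.rpow_one]
    calc c₁ * (c₁ * (2*p:ℕ) * A) = |c₁| * (|c₁| * (2*p) * A) := by
          push_cast
          rw [show |c₁| * (|c₁| * (2*p) * A) = (|c₁| * |c₁|) * (2*p*A) by ring, abs_mul_abs_self]; ring
      _ ≤ _ := by gcongr

lemma lower {K : Type*} [Field K] [NumberField K] (φ : K →+* ℂ) (z : 𝓞 K) (hz : z ≠ 0) {B : ℝ}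
    (hB : ∀ ψ : K →+* ℂ, ‖ψ (z:K)‖ ≤ B) : 1 ≤ ‖φ (z:K)‖ * B ^ (Module.finrank ℚ K - 1) := by
  have h1 := norm_norm_le_norm_mul_house_pow (z:K) φ
  have h2 : (1:ℝ) ≤ ‖Algebra.norm ℚ (z:K)‖ := by
    have : Algebra.norm ℚ (z:K) = ((Algebra.norm ℤ z : ℤ):ℚ) := by
      exact (Algebra.coe_norm_int z).symm
    rw [this]
    have h3 : Algebra.norm ℤ z ≠ 0 := by
      rw [Algebra.norm_ne_zero_iff]; exact hz
    rw [Int.norm_cast_rat, Int.norm_eq_abs]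
    exact_mod_cast Int.one_le_abs h3
  refine h2.trans (h1.trans ?_)
  gcongr
  · exact house_nonneg _
  · exact house_le_iff.2 hB

end BK

namespace BK
open Polynomial

lemma Bd_add {N : ℕ} {b b' : ℝ} {P P' : ℂ[X]} (h : Bd N b P) (h' : Bd N b' P') : Bd N (b+b') (P+P') := by
  refine ⟨(natDegree_add_le _ _).trans (max_le h.1 h'.1), ?_⟩
  calc _ ≤ ∑ i ∈ Finset.range (N+1), (‖P.coeff i‖ + ‖P'.coeff i‖) :=
        Finset.sum_le_sum fun i _ => by rw [coeff_add]; exact norm_add_le _ _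
    _ ≤ _ := by rw [Finset.sum_add_distrib]; exact add_le_add h.2 h'.2

lemma Bd_C_mul {N : ℕ} {b a' : ℝ} {P : ℂ[X]} (h : Bd N b P) {a : ℂ} (ha : ‖a‖ ≤ a') :
    Bd N (a'*b) (C a * P) := by
  refine ⟨(natDegree_C_mul_le _ _).trans h.1, ?_⟩
  have : 0 ≤ a' := (norm_nonneg _).trans ha
  have hs : 0 ≤ ∑ i ∈ Finset.range (N+1), ‖P.coeff i‖ := Finset.sum_nonneg fun _ _ => norm_nonneg _
  simp only [coeff_C_mul, norm_mul]
  rw [← Finset.mul_sum]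
  exact mul_le_mul ha h.2 hs this

lemma Bd_sum {N : ℕ} {κ : Type*} (s : Finset κ) (b : ℝ) (P : κ → ℂ[X]) (h : ∀ i ∈ s, Bd N b (P i)) :
    Bd N (s.card * b) (∑ i ∈ s, P i) := by
  classical
  induction s using Finset.induction_on with
  | empty => simp [Bd]
  | insert a s ha ih =>
    rw [Finset.sum_insert ha, Finset.card_insert_of_notMem ha]
    have h1 := Bd_add (h a (by simp)) (ih fun i hi => h i (by simp [hi]))
    convert h1 using 1
    push_cast; ring

/-- canonical word with given multiplicities -/
noncomputable def canW {G : Type*} [Fintype G] (τ : G → ℕ) : List G :=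
  (∑ σ, Multiset.replicate (τ σ) σ).toList

lemma canW_length {G : Type*} [Fintype G] (τ : G → ℕ) : (canW τ).length = ∑ σ, τ σ := by
  simp [canW]

lemma canW_perm {G : Type*} [Fintype G] [DecidableEq G] (l : List G) :
    l.Perm (canW fun σ => l.count σ) := by
  rw [← Multiset.coe_eq_coe, canW, Multiset.coe_toList]
  ext σ
  rw [Multiset.count_sum', Finset.sum_eq_single σ]
  · simp
  · intro b _ hb; simp [Multiset.count_replicate, hb]
  · simp

end BK

namespace BK
open Polynomial NumberField Matrix

/-- restriction of an embedding to integers -/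
noncomputable def rs {K : Type} [Field K] (ψ : K →+* ℂ) : 𝓞 K →+* ℂ := ψ.comp (algebraMap (𝓞 K) K)

/-- the word of pairs -/
def plW {K G ι : Type} [Field K] (δ : G → 𝓞 K) (θ : G → (ι → ℕ) → 𝓞 K) (l : List G) (κ : ι → ℕ) :
    List (𝓞 K × 𝓞 K) := l.map fun σ => (δ σ, θ σ κ)

lemma eval_bound {K G ι : Type} [Field K] (δ : G → 𝓞 K) (θ : G → (ι → ℕ) → 𝓞 K) (ψ : K →+* ℂ)
    (l : List G) (κ : ι → ℕ) {N : ℕ} {b c₀ Z : ℝ} (P : (𝓞 K)[X]) (hP : Bd N b (P.map (rs ψ)))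
    (hδ : ∀ σ, ‖rs ψ (δ σ)‖ ≤ 1) (hθ : ∀ σ, ‖rs ψ (θ σ κ)‖ ≤ c₀) (g : 𝓞 K) (hZ : 1 ≤ Z)
    (hg : ‖rs ψ g‖ ≤ Z) :
    ‖rs ψ ((opl (plW δ θ l κ) P).eval g)‖ ≤ (N + c₀) ^ l.length * b * Z ^ N := by
  have h1 : rs ψ ((opl (plW δ θ l κ) P).eval g) = ((opl (plW δ θ l κ) P).map (rs ψ)).eval (rs ψ g) := by
    rw [eval_map, eval₂_hom]
  rw [h1, opl_map]
  have h2 := Bd_opl (c₀ := c₀) ((plW δ θ l κ).map fun v => (rs ψ v.1, rs ψ v.2)) hP ?_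
  · have := Bd_eval h2 hZ hg
    simpa [plW] using this
  · intro v hv
    simp only [plW, List.map_map, List.mem_map, Function.comp] at hv
    obtain ⟨σ, _, rfl⟩ := hv
    exact ⟨hδ σ, hθ σ⟩

lemma exists_map_of_mem_range {α β : Type*} (f : α → β) {l : List β} (h : ∀ x ∈ l, x ∈ Set.range f) :
    ∃ l', List.map f l' = l := by
  have : l ∈ Set.range (List.map f) := by rw [Set.range_list_map]; exact h
  exact this

set_option maxHeartbeats 1000000 in
theorem engine (K : Type) [Field K] [NumberField K] (φ : K →+* ℂ) (ι G : Type) [Fintype ι] [Fintype G]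
    [DecidableEq ι] [DecidableEq G]
    (D : ℕ) (hι : Fintype.card ι = D) (hG : Fintype.card G = D) (hD : 1 ≤ D)
    (c : ℕ) (hc : 1 ≤ c)
    (hsieg : ∀ (α β : Type) [Fintype α] [Fintype β] (p : ℕ), 0 < p → Fintype.card α = p →
      Fintype.card β = 2 * p → ∀ (a : Matrix α β (𝓞 K)) (A : ℝ), 0 ≤ A →
      1 ≤ A → (∀ k l, ∀ ψ : K →+* ℂ, ‖ψ (a k l : K)‖ ≤ A) →
      ∃ ξ : β → 𝓞 K, ξ ≠ 0 ∧ a *ᵥ ξ = 0 ∧ ∀ l, ∀ ψ : K →+* ℂ, ‖ψ (ξ l : K)‖ ≤ c * (c * (2*p) * A))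
    (gam : (ι → ℕ) → 𝓞 K)
    (ℓ₀ : (ι → ℂ) →L[ℂ] ℂ) (hℓ₀ : ∀ s : ι → ℕ, ℓ₀ (fun j => (s j:ℂ)) = rs φ (gam s))
    (ℓ : (ι → ℕ) → (ι → ℂ) →L[ℂ] ℂ)
    (hgam : ∀ (ψ : K →+* ℂ) (S : ℕ) (s : ι → ℕ), (∀ j, s j < S) → ‖rs ψ (gam s)‖ ≤ c*S)
    (hℓ₀b : ∀ (x : ι → ℂ) (B : ℝ), 0 ≤ B → (∀ j, ‖x j‖ ≤ B) → ‖ℓ₀ x‖ ≤ c*B)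
    (hℓb : ∀ (κ : ι → ℕ) (A : ℕ) (x : ι → ℂ) (B : ℝ), 0 ≤ B → (∀ j, κ j < A) → (∀ j, ‖x j‖ ≤ B) →
      ‖ℓ κ x‖ ≤ c*A*B)
    (v : G → ι → ℂ) (hvb : ∀ σ, ‖v σ‖ ≤ c) (hspan : Submodule.span ℂ (Set.range v) = ⊤)
    (δ : G → 𝓞 K) (hδ : ∀ σ (ψ : K →+* ℂ), ‖rs ψ (δ σ)‖ ≤ 1) (hδv : ∀ σ, ℓ₀ (v σ) = rs φ (δ σ))
    (θ : G → (ι → ℕ) → 𝓞 K)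
    (hθ : ∀ σ (κ : ι → ℕ) (A : ℕ) (ψ : K →+* ℂ), (∀ j, κ j < A) → ‖rs ψ (θ σ κ)‖ ≤ c*A)
    (hθv : ∀ σ κ, ℓ κ (v σ) = rs φ (θ σ κ))
    (hE : ∀ L S : ℕ, ∃ (N : ℂ) (E : (ι → ℕ) → (ι → ℕ) → 𝓞 K), N ≠ 0 ∧
      ‖N‖ ≤ Real.exp (c*L*S) ∧ ∀ κ s : ι → ℕ, (∀ j, κ j < L) → (∀ j, s j < S) →
        rs φ (E κ s) = N * Complex.exp (ℓ κ (fun j => (s j:ℂ))) ∧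
        ∀ ψ : K →+* ℂ, ‖rs ψ (E κ s)‖ ≤ Real.exp (c*L*S))
    (w : ι → ℂ) (hw0 : ℓ₀ w = 1) (hw : Function.Injective fun κ => ℓ κ w) : False := by
  obtain ⟨S, M, hS, hM, hnum⟩ := numerics c D (Module.finrank ℚ K) hc hD
  obtain ⟨T, hT⟩ : ∃ T, T = M^D := ⟨_, rfl⟩
  obtain ⟨L0, hL0⟩ : ∃ L0, L0 = 2*T := ⟨_, rfl⟩
  obtain ⟨L, hL⟩ : ∃ L, L = S*M^(D-1) := ⟨_, rfl⟩
  obtain ⟨A, hA⟩ : ∃ A : ℝ, A = Real.exp (c*L*S) * (L0+c*L)^(D*T) * (c*S)^L0 := ⟨_, rfl⟩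
  obtain ⟨X', hX⟩ : ∃ X' : ℝ, X' = c*(c*(L^D*L0)*A) := ⟨_, rfl⟩
  obtain ⟨N, E, hN0, hN, hE⟩ := hE L S
  have hT0 : 0 < T := by rw [hT]; positivity
  have hL1 : 1 ≤ L := by rw [hL]; exact Nat.succ_le_of_lt (by positivity)
  have hc1 : (1:ℝ) ≤ c := by exact_mod_cast hc
  have hS1 : (1:ℝ) ≤ S := by exact_mod_cast hS
  have hcS : (1:ℝ) ≤ c*S := one_le_mul_of_one_le_of_one_le hc1 hS1
  have hL01 : (1:ℝ) ≤ L0 := by rw [hL0]; exact_mod_cast (by omega)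
  have hbase : (1:ℝ) ≤ L0 + c*L := by have : (0:ℝ) ≤ c*L := by positivity
                                      linarith
  have hA1 : 1 ≤ A := by
    rw [hA]
    refine one_le_mul_of_one_le_of_one_le (one_le_mul_of_one_le_of_one_le ?_ (one_le_pow₀ hbase))
      (one_le_pow₀ hcS)
    exact Real.one_le_exp (by positivity)
  have hX0 : 0 ≤ X' := by rw [hX]; positivity
  -- Siegel
  obtain ⟨a, ha⟩ : ∃ a : Matrix ((G → Fin T) × (ι → Fin S)) ((ι → Fin L) × Fin L0) (𝓞 K),
      ∀ k l, a k l = E (fun j => l.1 j) (fun j => k.2 j) *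
        (opl (plW δ θ (canW fun σ => (k.1 σ : ℕ)) (fun j => (l.1 j : ℕ))) (X ^ (l.2:ℕ))).eval
          (gam fun j => k.2 j) := ⟨fun k l => _, fun k l => rfl⟩
  have hcard : 2*(T^D*S^D) = L^D*L0 := by
    have h1 : (M^D)^D = (M^(D-1))^D * M^D := by
      rw [← mul_pow, ← pow_succ, Nat.sub_add_cancel hD]
    rw [hL0, hL, hT, mul_pow, h1]; ring
  obtain ⟨ξ, hξ0, hξa, hξb⟩ := hsieg ((G → Fin T) × (ι → Fin S)) ((ι → Fin L) × Fin L0) (T^D*S^D)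
    (by positivity) (by simp [hG, hι]) (by simp [hι, hcard]) a A (by linarith) hA1 (by
      intro k l ψ
      change ‖rs ψ (a k l)‖ ≤ A
      rw [ha, map_mul, norm_mul]
      have h1 := (hE (fun j => l.1 j) (fun j => k.2 j) (fun j => (l.1 j).2) (fun j => (k.2 j).2)).2 ψ
      have h2 := eval_bound δ θ ψ (canW fun σ => (k.1 σ : ℕ)) (fun j => (l.1 j:ℕ)) (N := L0) (b := 1)
        (c₀ := c*L) (Z := c*S) (X ^ (l.2:ℕ)) (by
          rw [Polynomial.map_pow, map_X]; exact Bd_X_pow l.2.2.le)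
        (fun σ => hδ σ ψ) (fun σ => hθ σ _ L ψ fun j => (l.1 j).2) (gam fun j => k.2 j) hcS
        (hgam ψ S _ fun j => (k.2 j).2)
      have h3 : ((L0:ℝ) + c*L)^(canW fun σ => (k.1 σ : ℕ)).length ≤ (L0 + c*L)^(D*T) := by
        refine pow_le_pow_right₀ hbase ?_
        rw [canW_length]
        calc ∑ σ, (k.1 σ : ℕ) ≤ ∑ σ : G, T := Finset.sum_le_sum fun σ _ => (k.1 σ).2.le
          _ = D*T := by simp [hG]
      rw [hA, mul_assoc]
      refine mul_le_mul h1 (h2.trans ?_) (norm_nonneg _) (Real.exp_pos _).le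
      rw [mul_one]
      gcongr)
  have hξb' : ∀ l (ψ : K →+* ℂ), ‖rs ψ (ξ l)‖ ≤ X' := by
    intro l ψ
    refine (hξb l ψ).trans (le_of_eq ?_)
    have : (2*((T^D*S^D : ℕ):ℝ)) = L^D*L0 := by exact_mod_cast hcard
    rw [this, hX]
  obtain ⟨P, hP⟩ : ∃ P : (ι → Fin L) → (𝓞 K)[X], ∀ κ, P κ = ∑ i : Fin L0, C (ξ (κ, i)) * X ^ (i:ℕ) :=
    ⟨_, fun κ => rfl⟩
  have hPb : ∀ κ (ψ : K →+* ℂ), Bd L0 (L0*X') ((P κ).map (rs ψ)) := by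
    intro κ ψ
    rw [hP, Polynomial.map_sum]
    have := Bd_sum (N := L0) (Finset.univ : Finset (Fin L0)) X'
      (fun i => (C (ξ (κ, i)) * X ^ (i:ℕ)).map (rs ψ)) (by
        intro i _
        simp only [Polynomial.map_mul, map_C, Polynomial.map_pow, map_X]
        have := Bd_C_mul (Bd_X_pow (N := L0) i.2.le) (hξb' (κ, i) ψ)
        simpa using this)
    simpa using this
  have hrsinj : Function.Injective (rs φ) := by
    intro x y hxy
    exact RingOfIntegers.coe_injective (φ.injective hxy)
  have hPne : ∃ κ, (P κ).map (rs φ) ≠ 0 := by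
    by_contra! h
    apply hξ0
    funext ⟨κ, i⟩
    have h1 : P κ = 0 := (Polynomial.map_eq_zero_iff hrsinj).1 (h κ)
    have h2 : (P κ).coeff i = ξ (κ, i) := by
      rw [hP, finsetSum_coeff, Finset.sum_eq_single i]
      · simp
      · intro b _ hb
        rw [coeff_C_mul, coeff_X_pow, if_neg (fun h => hb (Fin.ext h.symm)), mul_zero]
      · simp
    rw [← h2, h1]; simp
  obtain ⟨F, hF⟩ : ∃ F : (ι → ℂ) → ℂ, F = fun x => ∑ κ : ι → Fin L,
      expP ℓ₀ (ℓ fun j => κ j) ((P κ).map (rs φ)) x := ⟨_, rfl⟩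
  have hFs : Sm F := by rw [hF]; exact ContDiff.sum fun i _ => expP_sm _ _ _
  obtain ⟨Z, hZ⟩ : ∃ Z : List G → (ι → ℕ) → 𝓞 K, ∀ l s, Z l s = ∑ κ : ι → Fin L,
      E (fun j => κ j) s * (opl (plW δ θ l (fun j => (κ j : ℕ))) (P κ)).eval (gam s) :=
    ⟨_, fun l s => rfl⟩
  have hZF : ∀ l s, (∀ j, s j < S) → N * ddl (l.map v) F (fun j => (s j:ℂ)) = rs φ (Z l s) := by
    intro l s hs
    rw [hF, ddl_sum _ _ _ (fun i => expP_sm _ _ _), hZ, map_sum]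
    simp only
    rw [Finset.mul_sum]
    refine Finset.sum_congr rfl fun κ _ => ?_
    rw [ddl_expP, expP, map_mul, (hE (fun j => κ j) s (fun j => (κ j).2) hs).1, hℓ₀]
    have : rs φ ((opl (plW δ θ l fun j => (κ j : ℕ)) (P κ)).eval (gam s)) =
      (opl ((l.map v).map fun v => (ℓ₀ v, ℓ (fun j => κ j) v)) ((P κ).map (rs φ))).eval
        (rs φ (gam s)) := by
      rw [← eval₂_hom, ← eval_map, opl_map, plW, List.map_map, List.map_map]
      congr 2
      refine List.map_congr_left fun σ _ => ?_
      simp [hδv, hθv]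
    rw [this]; ring
  have hZ0 : ∀ l s, l.length < T → (∀ j, s j < S) → Z l s = 0 := by
    intro l s hl hs
    have hcnt : ∀ σ, l.count σ < T := fun σ => (List.count_le_length).trans_lt hl
    have h1 := congrFun hξa (fun σ => ⟨l.count σ, hcnt σ⟩, fun j => ⟨s j, hs j⟩)
    rw [Pi.zero_apply, mulVec, dotProduct, Fintype.sum_prod_type] at h1
    rw [← h1, hZ]
    refine Finset.sum_congr rfl fun κ _ => ?_
    rw [hP, opl_sum, eval_finsetSum, Finset.mul_sum]
    refine Finset.sum_congr rfl fun i _ => ?_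
    rw [ha, opl_C_mul, eval_mul, eval_C]
    simp only
    have h2 : opl (plW δ θ l fun j => (κ j:ℕ)) (X ^ (i:ℕ)) =
        opl (plW δ θ (canW fun σ => l.count σ) fun j => (κ j:ℕ)) (X ^ (i:ℕ)) := by
      refine opl_perm ?_ _
      exact (canW_perm l).map _
    rw [h2]; ring
  have hex : ∃ n, ∃ l : List G, l.length = n ∧ ∃ s : ι → ℕ, (∀ j, s j < S) ∧ Z l s ≠ 0 := by
    by_contra! h
    obtain ⟨κ, hκ⟩ := hPne
    refine hκ (expP_sum_nonvanish ℓ₀ (fun κ : ι → Fin L => ℓ fun j => κ j)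
      (fun κ => (P κ).map (rs φ)) w hw0 ?_ ?_ κ)
    · intro κ κ' hk
      have := hw hk
      funext j; exact Fin.ext (congrFun this j)
    · intro l
      have := words_span (Set.range v) hspan 0 l.length hFs (by
        intro l' _ hl'
        obtain ⟨l'', rfl⟩ : ∃ l'' : List G, l''.map v = l' := by
          have := exists_map_of_mem_range v hl'
          exact this
        have h2 := hZF l'' (fun _ => 0) (fun _ => hS)
        rw [h l''.length l'' rfl (fun _ => 0) (fun _ => hS), map_zero] at h2
        rcases mul_eq_zero.1 h2 with h3 | h3
        · exact absurd h3 hN0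
        · have e : (0 : ι → ℂ) = fun j => ((0:ℕ):ℂ) := by funext j; simp
          rw [e]; exact h3) l rfl
      rw [hF] at this; exact this
  classical
  obtain ⟨l, hln, s, hs, hZne⟩ := Nat.find_spec hex
  have hmin := fun m => Nat.find_min (m := m) hex
  obtain ⟨n, hn⟩ : ∃ n, n = Nat.find hex := ⟨_, rfl⟩
  rw [← hn] at hln hmin
  have hTn : T ≤ n := by
    by_contra! h
    exact hZne (hZ0 l s (by omega) hs)
  have hvan : ∀ s : ι → ℕ, (∀ i, s i < S) → ∀ l : List (ι → ℂ), l.length < n →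
      ddl l F (fun i => (s i : ℂ)) = 0 := by
    intro s hs l hl
    refine words_span (Set.range v) hspan _ l.length hFs ?_ l rfl
    intro l' hl' hl''
    obtain ⟨l'', rfl⟩ : ∃ l'' : List G, l''.map v = l' :=
      exists_map_of_mem_range v hl''
    have h2 := hZF l'' s hs
    have h3 : Z l'' s = 0 := by
      by_contra h4
      refine hmin l''.length ?_ ⟨l'', rfl, s, hs, h4⟩
      simp at hl'; omega
    rw [h3, map_zero] at h2
    exact (mul_eq_zero.1 h2).resolve_left hN0
  obtain ⟨R, T'', hSR, hDT, hfin⟩ := hnum n (hT ▸ hTn)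
  obtain ⟨B, hB⟩ : ∃ B : ℝ, B = L^D*(Real.exp (c*L*S)*((L0+c*L)^n*(L0*X')*(c*S)^L0)) := ⟨_, rfl⟩
  obtain ⟨ε, hε⟩ : ∃ ε : ℝ, ε = (R:ℝ)/(R-S)*(((S:ℝ)+S)/(R-S))^(S*T'') := ⟨_, rfl⟩
  obtain ⟨hε1, hlt⟩ := hfin T L0 L A X' B ε hT hL0 hL hA hX hB hε
  have hSR' : (S:ℝ) < R := by exact_mod_cast hSR
  have hZB : ∀ ψ : K →+* ℂ, ‖ψ (Z l s : K)‖ ≤ B := by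
    intro ψ
    change ‖rs ψ (Z l s)‖ ≤ B
    rw [hZ, map_sum, hB]
    refine (norm_sum_le _ _).trans ?_
    have : ∀ κ : ι → Fin L, ‖rs ψ (E (fun j => κ j) s *
      (opl (plW δ θ l (fun j => (κ j : ℕ))) (P κ)).eval (gam s))‖ ≤
        Real.exp (c*L*S)*((L0+c*L)^n*(L0*X')*(c*S)^L0) := by
      intro κ
      rw [map_mul, norm_mul]
      have h1 := (hE (fun j => κ j) s (fun j => (κ j).2) hs).2 ψ
      have h2 := eval_bound δ θ ψ l (fun j => (κ j:ℕ)) (c₀ := c*L) (Z := c*S) (P κ) (hPb κ ψ)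
        (fun σ => hδ σ ψ) (fun σ => hθ σ _ L ψ fun j => (κ j).2) (gam s) hcS (hgam ψ S s hs)
      rw [hln] at h2
      exact mul_le_mul h1 h2 (norm_nonneg _) (Real.exp_pos _).le
    refine (Finset.sum_le_sum fun κ _ => this κ).trans (le_of_eq ?_)
    simp [hι]
  have hlow := lower φ (Z l s) hZne hZB
  have hFM : ∀ x : ι → ℂ, (∀ i, ‖x i‖ ≤ R) → ‖F x‖ ≤ L^D*((L0*X')*(c*R)^L0*Real.exp (c*L*R)) := by
    intro x hx
    rw [hF]
    refine (norm_sum_le _ _).trans ?_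
    have : ∀ κ : ι → Fin L, ‖expP ℓ₀ (ℓ fun j => κ j) ((P κ).map (rs φ)) x‖ ≤
        (L0*X')*(c*R)^L0*Real.exp (c*L*R) := by
      intro κ
      rw [expP, norm_mul]
      have hR1 : (1:ℝ) ≤ R := by linarith
      refine mul_le_mul ?_ ?_ (norm_nonneg _) (by positivity)
      · exact Bd_eval (hPb κ φ) (one_le_mul_of_one_le_of_one_le hc1 hR1)
          (hℓ₀b x R (by linarith) hx)
      · rw [Complex.norm_exp]
        refine Real.exp_le_exp.2 ((Complex.re_le_norm _).trans ?_)
        exact hℓb _ L x R (by linarith) (fun j => (κ j).2) hx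
    refine (Finset.sum_le_sum fun κ _ => this κ).trans (le_of_eq ?_)
    simp [hι]
  have hB0 : 0 ≤ B := (norm_nonneg _).trans (hZB φ)
  have hε0 : 0 ≤ ε := by
    rw [hε]
    have : (0:ℝ) < R - S := by linarith
    positivity
  have hsch := schwarz (ι := ι) S T'' R S ε (by positivity) hSR' le_rfl hε.ge hε1 hS Finset.univ n F _ hFs
    (by rw [Finset.card_univ, hι]; exact hDT) (fun x y h => by
      have : x = y := funext fun j => h j (Finset.mem_univ _)
      rw [this]) hvan hFM
  rw [Finset.card_univ, hι] at hsch
  have hn0 : (0:ℝ) < n := by exact_mod_cast (by omega : 0 < n)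
  have hup := ddl_bound (ρ := 1/n) (C := c) (by positivity) (by linarith) (l.map v) hFs
    (by intro x hx; obtain ⟨σ, _, rfl⟩ := List.mem_map.1 hx; exact hvb σ) (fun j => (s j:ℂ))
    (M := 2^D*ε*(L^D*((L0*X')*(c*R)^L0*Real.exp (c*L*R)))) (by
      intro y hy
      rw [List.length_map, hln, mul_one_div_cancel hn0.ne'] at hy
      refine (hsch y ?_).trans ?_
      · intro i
        have h1 : ‖y i - (s i:ℂ)‖ ≤ 1 := (norm_le_pi_norm (y - fun j => (s j:ℂ)) i).trans hy
        have h2 : ‖y i‖ ≤ ‖y i - (s i:ℂ)‖ + ‖(s i:ℂ)‖ := by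
          simpa using norm_add_le (y i - (s i:ℂ)) (s i:ℂ)
        rw [Complex.norm_natCast] at h2
        have h3 : (s i:ℝ) + 1 ≤ S := by exact_mod_cast hs i
        linarith
      · gcongr
        linarith)
  rw [List.length_map, hln, div_div_eq_mul_div, div_one] at hup
  have hfinal : ‖rs φ (Z l s)‖ ≤ Real.exp (c*L*S)*((c*n)^n*
      (2^D*ε*(L^D*((L0*X')*(c*R)^L0*Real.exp (c*L*R))))) := by
    rw [← hZF l s hs, norm_mul]
    exact mul_le_mul hN hup (norm_nonneg _) (Real.exp_pos _).le
  have : (1:ℝ) < 1 := by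
    refine lt_of_le_of_lt (hlow.trans ?_) hlt
    exact mul_le_mul_of_nonneg_right hfinal (by positivity)
  exact lt_irrefl _ this

end BK

namespace BK
open NumberField

lemma exists_nat_mul_int {K : Type} [Field K] [NumberField K] (x : K) :
    ∃ n : ℕ, 1 ≤ n ∧ ∃ a : 𝓞 K, algebraMap (𝓞 K) K a = n * x := by
  have hx : IsAlgebraic ℤ x := by
    have : IsAlgebraic ℚ x := Algebra.IsAlgebraic.isAlgebraic x
    exact (IsFractionRing.isAlgebraic_iff ℤ ℚ K).2 this
  obtain ⟨y, hy, hint⟩ := hx.exists_integral_multiple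
  refine ⟨y.natAbs, by omega, ?_⟩
  rcases Int.natAbs_eq y with h | h
  · refine ⟨⟨_, hint⟩, ?_⟩
    change y • x = _
    rw [zsmul_eq_mul, h]; simp
  · refine ⟨-⟨_, hint⟩, ?_⟩
    change -(y • x) = _
    rw [zsmul_eq_mul, h]; simp

lemma powE {K : Type} [Field K] [NumberField K] (x : K) (hx : x ≠ 0) :
    ∃ n : ℕ, 1 ≤ n ∧ ∃ C : ℝ, 1 ≤ C ∧ ∀ (H : ℕ) (t : ℤ), |t| ≤ H → ∃ E : 𝓞 K,
      algebraMap (𝓞 K) K E = (n:K)^H * x ^ t ∧ ∀ ψ : K →+* ℂ, ‖rs ψ E‖ ≤ C^H := by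
  obtain ⟨n1, hn1, a1, ha1⟩ := exists_nat_mul_int x
  obtain ⟨n2, hn2, a2, ha2⟩ := exists_nat_mul_int x⁻¹
  set a := n2 * a1 with hadef
  set b := n1 * a2 with hbdef
  have ha : algebraMap (𝓞 K) K a = (n1*n2:ℕ) * x := by
    rw [hadef, map_mul, map_natCast, ha1]; push_cast; ring
  have hb : algebraMap (𝓞 K) K b = (n1*n2:ℕ) * x⁻¹ := by
    rw [hbdef, map_mul, map_natCast, ha2]; push_cast; ring
  set n := n1*n2 with hn
  set C : ℝ := 1 + n + ∑ ψ : K →+* ℂ, (‖rs ψ a‖ + ‖rs ψ b‖) with hC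
  have hs : 0 ≤ ∑ ψ : K →+* ℂ, (‖rs ψ a‖ + ‖rs ψ b‖) := Finset.sum_nonneg fun _ _ => by positivity
  have hψ : ∀ ψ, ‖rs ψ a‖ + ‖rs ψ b‖ ≤ ∑ ψ : K →+* ℂ, (‖rs ψ a‖ + ‖rs ψ b‖) := fun ψ =>
    Finset.single_le_sum (f := fun ψ : K →+* ℂ => ‖rs ψ a‖ + ‖rs ψ b‖)
      (fun _ _ => by positivity) (Finset.mem_univ ψ)
  have hn0 : (0:ℝ) ≤ n := by positivity
  have hn1' : 1 ≤ n := Nat.mul_pos hn1 hn2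
  have hCa : ∀ ψ, ‖rs ψ a‖ ≤ C := fun ψ => by
    have := hψ ψ; have := norm_nonneg (rs ψ b); rw [hC]; linarith
  have hCb : ∀ ψ, ‖rs ψ b‖ ≤ C := fun ψ => by
    have := hψ ψ; have := norm_nonneg (rs ψ a); rw [hC]; linarith
  have hCn : (n:ℝ) ≤ C := by rw [hC]; linarith
  refine ⟨n, hn1', C, by rw [hC]; linarith, ?_⟩
  have key : ∀ (H m : ℕ) (d : 𝓞 K) (y : K), m ≤ H → algebraMap (𝓞 K) K d = n * y → (∀ ψ : K →+* ℂ, ‖rs ψ d‖ ≤ C) →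
      ∃ E : 𝓞 K, algebraMap (𝓞 K) K E = (n:K)^H * y^m ∧ ∀ ψ : K →+* ℂ, ‖rs ψ E‖ ≤ C^H := by
    intro H m d y hm hd hdC
    refine ⟨d^m * (n:𝓞 K)^(H-m), ?_, fun ψ => ?_⟩
    · rw [map_mul, map_pow, map_pow, map_natCast, hd, mul_pow, mul_right_comm, ← pow_add, Nat.add_sub_cancel' hm]
    · rw [map_mul, map_pow, map_pow, norm_mul, norm_pow, norm_pow, map_natCast, Complex.norm_natCast]
      calc _ ≤ C^m * C^(H-m) := by
            gcongr
            exact hdC ψ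
        _ = _ := by rw [← pow_add, Nat.add_sub_cancel' hm]
  intro H t ht
  obtain ⟨m, rfl | rfl⟩ := Int.eq_nat_or_neg t
  · simpa using key H m a x (by simpa using ht) ha hCa
  · simpa using key H m b x⁻¹ (by simpa using ht) hb hCb

lemma prodE {K I : Type} [Field K] [NumberField K] [Fintype I] (x : I → K) (hx : ∀ i, x i ≠ 0) :
    ∃ n : ℕ, 1 ≤ n ∧ ∃ C : ℝ, 1 ≤ C ∧ ∀ (H : ℕ) (t : I → ℤ), (∀ i, |t i| ≤ H) → ∃ E : 𝓞 K,
      algebraMap (𝓞 K) K E = (n:K)^H * ∏ i, x i ^ t i ∧ ∀ ψ : K →+* ℂ, ‖rs ψ E‖ ≤ C^H := by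
  choose n hn C hC h using fun i => powE (x i) (hx i)
  refine ⟨∏ i, n i, Nat.succ_le_of_lt (Finset.prod_pos fun i _ => hn i), ∏ i, C i, ?_, ?_⟩
  · calc (1:ℝ) = ∏ i : I, (1:ℝ) := by simp
      _ ≤ _ := Finset.prod_le_prod (by simp) fun i _ => hC i
  intro H t ht
  choose E hE hEb using fun i => h i H (t i) (ht i)
  refine ⟨∏ i, E i, ?_, fun ψ => ?_⟩
  · rw [map_prod, Nat.cast_prod, ← Finset.prod_pow, ← Finset.prod_mul_distrib]
    exact Finset.prod_congr rfl fun i _ => hE i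
  · rw [map_prod, norm_prod, ← Finset.prod_pow]
    exact Finset.prod_le_prod (fun _ _ => norm_nonneg _) fun i _ => hEb i ψ

end BK

set_option linter.unusedSectionVars false
namespace BK
open NumberField

section core
variable {K : Type} [Field K] [NumberField K] [IsGalois ℚ K] (φ : K →+* ℂ)

/-- conjugate embedding on integers -/
noncomputable def eg (σ : Gal(K/ℚ)) : 𝓞 K →+* ℂ := rs (φ.comp (σ : K →+* K))

lemma eg_inj (σ : Gal(K/ℚ)) : Function.Injective (eg φ σ) := by
  intro x y h
  exact RingOfIntegers.coe_injective ((φ.comp (σ : K →+* K)).injective h)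

lemma eg_indep (a : Gal(K/ℚ) → ℂ) (h : ∀ y : 𝓞 K, ∑ σ, a σ * eg φ σ y = 0) : ∀ σ, a σ = 0 := by
  have h1 : LinearIndependent ℂ (fun σ : Gal(K/ℚ) => ((eg φ σ : 𝓞 K →* ℂ) : 𝓞 K → ℂ)) := by
    refine (linearIndependent_monoidHom (𝓞 K) ℂ).comp (fun σ : Gal(K/ℚ) => (eg φ σ : 𝓞 K →* ℂ)) ?_
    intro σ τ h
    ext x
    obtain ⟨n, hn, z, hz⟩ := exists_nat_mul_int x
    have h2 : eg φ σ z = eg φ τ z := DFunLike.congr_fun h z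
    have h3 : φ (σ (algebraMap (𝓞 K) K z)) = φ (τ (algebraMap (𝓞 K) K z)) := h2
    have h4 := φ.injective h3
    rw [hz, map_mul, map_mul, map_natCast, map_natCast] at h4
    exact mul_left_cancel₀ (by exact_mod_cast (by omega : n ≠ 0)) h4
  rw [Fintype.linearIndependent_iff] at h1
  refine h1 a ?_
  funext y
  simpa using h y

lemma trace_eg (y : 𝓞 K) : ∑ σ, eg φ σ y = ((Algebra.trace ℤ (𝓞 K) y : ℤ) : ℂ) := by
  have h1 := trace_eq_sum_automorphisms (K := ℚ) (y : K)
  rw [← Algebra.coe_trace_int] at h1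
  have h2 := congrArg φ h1
  rw [map_sum] at h2
  have h3 : φ ((algebraMap ℚ K) ((Algebra.trace ℤ (𝓞 K)) y : ℤ)) = ((Algebra.trace ℤ (𝓞 K) y : ℤ) : ℂ) := by
    simp
  rw [h3] at h2
  exact h2.symm

/-- index type -/
abbrev IX (K : Type) [Field K] [NumberField K] := Module.Free.ChooseBasisIndex ℤ (𝓞 K)

/-- integer combination -/
noncomputable def gm (s : IX K → ℕ) : 𝓞 K := ∑ j, (s j : 𝓞 K) * RingOfIntegers.basis K j

lemma gm_inj : Function.Injective (gm (K := K)) := by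
  intro s t h
  have h1 := (RingOfIntegers.basis K).linearIndependent
  rw [Fintype.linearIndependent_iff] at h1
  funext j
  have := h1 (fun j => (s j:ℤ) - t j) (by
    simp only [sub_smul, Finset.sum_sub_distrib]
    rw [sub_eq_zero]
    simpa [gm] using h) j
  omega

/-- coordinates change -/
noncomputable def Psi : (IX K → ℂ) →ₗ[ℂ] (Gal(K/ℚ) → ℂ) where
  toFun x τ := ∑ j, x j * eg φ τ (RingOfIntegers.basis K j)
  map_add' x y := by funext τ; simp [add_mul, Finset.sum_add_distrib]
  map_smul' a x := by funext τ; simp [Finset.mul_sum, mul_assoc]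

lemma Psi_nat (s : IX K → ℕ) (τ) : Psi φ (fun j => (s j:ℂ)) τ = eg φ τ (gm s) := by
  simp [Psi, gm]

lemma card_IX : Fintype.card (IX K) = Module.finrank ℚ K := by
  rw [← Module.finrank_eq_card_chooseBasisIndex, RingOfIntegers.rank]

lemma card_Gal : Fintype.card Gal(K/ℚ) = Module.finrank ℚ K := by
  rw [← IsGalois.card_aut_eq_finrank, Nat.card_eq_fintype_card]

lemma Psi_bij : Function.Bijective (Psi φ) := by
  have hs : Function.Surjective (Psi φ) := by
    rw [← LinearMap.range_eq_top]
    by_contra hne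
    obtain ⟨f, hf0, hf⟩ := Submodule.exists_le_ker_of_lt_top _ (lt_top_iff_ne_top.2 hne)
    apply hf0
    classical
    have hfx : ∀ x : Gal(K/ℚ) → ℂ, f x = ∑ σ, f (Pi.single σ 1) * x σ := by
      intro x
      conv_lhs => rw [pi_eq_sum_univ x]
      rw [map_sum]
      refine Finset.sum_congr rfl fun σ _ => ?_
      rw [map_smul, smul_eq_mul, mul_comm]
      congr 2
      funext τ; simp [Pi.single_apply, eq_comm]
    have h0 := eg_indep φ (fun σ => f (Pi.single σ 1)) (by
      intro y
      have hb : ∀ j, ∑ σ, f (Pi.single σ 1) * eg φ σ (RingOfIntegers.basis K j) = 0 := by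
        intro j
        have h1 : f (Psi φ (Pi.single j 1)) = 0 := hf ⟨_, rfl⟩
        rw [hfx] at h1
        rw [← h1]
        refine Finset.sum_congr rfl fun σ _ => ?_
        congr 1
        simp [Psi, Pi.single_apply]
      rw [← (RingOfIntegers.basis K).sum_repr y]
      simp only [map_sum, Finset.mul_sum, zsmul_eq_mul, map_mul, map_intCast]
      rw [Finset.sum_comm]
      refine Finset.sum_eq_zero fun j _ => ?_
      have := congrArg (fun z => (((RingOfIntegers.basis K).repr y j : ℤ):ℂ) * z) (hb j)
      simp only [mul_zero, Finset.mul_sum] at this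
      rw [← this]
      exact Finset.sum_congr rfl fun σ _ => by ring)
    ext x
    simp [h0]
  refine ⟨?_, hs⟩
  rw [LinearMap.injective_iff_surjective_of_finrank_eq_finrank]
  · exact hs
  · rw [Module.finrank_fintype_fun_eq_card, Module.finrank_fintype_fun_eq_card, card_IX, card_Gal]

end core
end BK

set_option linter.unusedSectionVars false
namespace BK
open NumberField

lemma exists_bound (l : List ℝ) : ∃ c : ℕ, ∀ x ∈ l, x ≤ c := by
  induction l with
  | nil => exact ⟨0, by simp⟩
  | cons a l ih =>
    obtain ⟨c, hc⟩ := ih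
    obtain ⟨d, hd⟩ := exists_nat_ge a
    refine ⟨c + d, ?_⟩
    intro x hx
    push_cast
    have h1 : (0:ℝ) ≤ c := by positivity
    have h2 : (0:ℝ) ≤ d := by positivity
    rcases List.mem_cons.1 hx with rfl | hx
    · linarith
    · have := hc x hx; linarith

section core
variable {K : Type} [Field K] [NumberField K] [IsGalois ℚ K] (φ : K →+* ℂ)

/-- basis size -/
noncomputable def HH (K : Type) [Field K] [NumberField K] : ℝ :=
  ∑ j : IX K, ∑ ψ : K →+* ℂ, ‖rs ψ (RingOfIntegers.basis K j)‖

lemma HH_nonneg : 0 ≤ HH K := Finset.sum_nonneg fun _ _ => Finset.sum_nonneg fun _ _ => norm_nonneg _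

lemma HH_le (ψ : K →+* ℂ) : ∑ j : IX K, ‖rs ψ (RingOfIntegers.basis K j)‖ ≤ HH K :=
  Finset.sum_le_sum fun j _ => Finset.single_le_sum
    (f := fun ψ : K →+* ℂ => ‖rs ψ (RingOfIntegers.basis K j)‖) (fun _ _ => norm_nonneg _) (Finset.mem_univ ψ)

lemma comb_bound (ψ : K →+* ℂ) (x : IX K → ℂ) (B : ℝ) (hB : 0 ≤ B) (hx : ∀ j, ‖x j‖ ≤ B) :
    ‖∑ j, x j * rs ψ (RingOfIntegers.basis K j)‖ ≤ HH K * B := by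
  refine (norm_sum_le _ _).trans ?_
  calc _ ≤ ∑ j : IX K, B * ‖rs ψ (RingOfIntegers.basis K j)‖ := by
        refine Finset.sum_le_sum fun j _ => ?_
        rw [norm_mul]; exact mul_le_mul_of_nonneg_right (hx j) (norm_nonneg _)
    _ = B * ∑ j : IX K, ‖rs ψ (RingOfIntegers.basis K j)‖ := by rw [Finset.mul_sum]
    _ ≤ B * HH K := mul_le_mul_of_nonneg_left (HH_le ψ) hB
    _ = _ := mul_comm _ _

lemma gm_bound (ψ : K →+* ℂ) (S : ℕ) (s : IX K → ℕ) (hs : ∀ j, s j < S) : ‖rs ψ (gm s)‖ ≤ HH K * S := by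
  have := comb_bound ψ (fun j => (s j:ℂ)) S (by positivity) (by
    intro j; rw [Complex.norm_natCast]; exact_mod_cast (hs j).le)
  simpa [gm] using this

lemma Psi_bound (x : IX K → ℂ) (B : ℝ) (hB : 0 ≤ B) (hx : ∀ j, ‖x j‖ ≤ B) (τ) :
    ‖Psi φ x τ‖ ≤ HH K * B := comb_bound (φ.comp (τ : K →+* K)) x B hB hx

/-- Galois action on integers -/
noncomputable def sg (σ : Gal(K/ℚ)) : 𝓞 K →+* 𝓞 K := RingOfIntegers.mapRingHom (σ : K →+* K)

lemma rs_sg (ψ : K →+* ℂ) (σ : Gal(K/ℚ)) (x : 𝓞 K) : rs ψ (sg σ x) = rs (ψ.comp (σ : K →+* K)) x := rfl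

/-- linear forms -/
noncomputable def lf (Λ : Gal(K/ℚ) → ℂ) (κ : IX K → ℕ) : (IX K → ℂ) →L[ℂ] ℂ :=
  LinearMap.toContinuousLinearMap
    (∑ σ, (eg φ σ (gm κ) * Λ σ) • ((LinearMap.proj σ : (Gal(K/ℚ) → ℂ) →ₗ[ℂ] ℂ) ∘ₗ Psi φ))

lemma lf_apply (Λ : Gal(K/ℚ) → ℂ) (κ : IX K → ℕ) (x : IX K → ℂ) :
    lf φ Λ κ x = ∑ σ, eg φ σ (gm κ) * Λ σ * Psi φ x σ := by
  simp [lf]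

lemma norm_le_sum2 {A B : Type} [Fintype A] [Fintype B] (f : A → B → ℝ) (hf : ∀ a b, 0 ≤ f a b) (a b) :
    f a b ≤ ∑ a, ∑ b, f a b :=
  (Finset.single_le_sum (f := fun b => f a b) (fun _ _ => hf _ _) (Finset.mem_univ b)).trans
    (Finset.single_le_sum (f := fun a => ∑ b, f a b)
      (fun _ _ => Finset.sum_nonneg fun _ _ => hf _ _) (Finset.mem_univ a))

set_option maxHeartbeats 1000000 in
theorem baker_core {I : Type} [Fintype I] (lam : I → ℂ) (hli : LinearIndependent ℚ lam) (α : I → K)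
    (hα : ∀ i, φ (α i) = Complex.exp (lam i)) (β : I → 𝓞 K) (β0 : 𝓞 K)
    (h : ∑ i, rs φ (β i) * lam i = rs φ β0) : ∀ i, β i = 0 := by
  classical
  obtain ⟨Λ, hΛ⟩ : ∃ Λ : Gal(K/ℚ) → ℂ, ∀ σ, Λ σ = ∑ i, eg φ σ (β i) * lam i := ⟨_, fun _ => rfl⟩
  have hΛ1 : Λ 1 = rs φ β0 := by rw [hΛ, ← h]; rfl
  have hlamT : ∀ y : 𝓞 K, ∑ σ, eg φ σ y * Λ σ = ∑ i, ((Algebra.trace ℤ (𝓞 K) (y * β i) : ℤ):ℂ) * lam i := by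
    intro y
    simp only [hΛ, Finset.mul_sum]
    rw [Finset.sum_comm]
    refine Finset.sum_congr rfl fun i _ => ?_
    rw [← trace_eg φ, Finset.sum_mul]
    refine Finset.sum_congr rfl fun σ _ => ?_
    rw [map_mul]; ring
  by_contra hne
  push Not at hne
  obtain ⟨i0, hi0⟩ := hne
  have hΛne : ∃ σ, Λ σ ≠ 0 := by
    by_contra! h0
    apply hi0
    have h1 : ∀ y : 𝓞 K, Algebra.trace ℤ (𝓞 K) (y * β i0) = 0 := by
      intro y
      have h2 := hlamT y
      simp only [h0, mul_zero, Finset.sum_const_zero] at h2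
      have h3 := Fintype.linearIndependent_iff.1 hli
        (fun i => ((Algebra.trace ℤ (𝓞 K) (y * β i) : ℤ) : ℚ)) (by
          rw [h2]
          refine Finset.sum_congr rfl fun i _ => ?_
          rw [Rat.smul_def]; push_cast; rfl) i0
      exact_mod_cast h3
    have h2 := eg_indep φ (fun σ => eg φ σ (β i0)) (by
      intro y
      have := trace_eg φ (y * β i0)
      rw [h1] at this
      simp only [map_mul, Int.cast_zero] at this
      rw [← this]
      exact Finset.sum_congr rfl fun σ _ => mul_comm _ _) 1
    exact eg_inj φ 1 (by rw [map_zero]; exact h2)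
  obtain ⟨σ0, hσ0, hσ01⟩ : ∃ σ0, Λ σ0 ≠ 0 ∧ (σ0 ≠ 1 → Λ 1 = 0) := by
    by_cases h1 : Λ 1 = 0
    · obtain ⟨σ, hσ⟩ := hΛne; exact ⟨σ, hσ, fun _ => h1⟩
    · exact ⟨1, h1, fun h => absurd rfl h⟩
  obtain ⟨cs, hcs⟩ : ∃ cs : Gal(K/ℚ) → ℂ, ∀ σ, cs σ = if σ = 1 ∨ Λ σ = 0 then 1 else (Λ σ)⁻¹ :=
    ⟨_, fun _ => rfl⟩
  have hcs0 : ∀ σ, cs σ ≠ 0 := by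
    intro σ; rw [hcs]; split_ifs with h1
    · exact one_ne_zero
    · push Not at h1; exact inv_ne_zero h1.2
  obtain ⟨es, hes⟩ : ∃ es : Gal(K/ℚ) → 𝓞 K, ∀ σ, es σ = if σ = 1 then β0 else if Λ σ = 0 then 0 else 1 :=
    ⟨_, fun _ => rfl⟩
  have hescs : ∀ σ, rs φ (es σ) = Λ σ * cs σ := by
    intro σ
    rw [hes, hcs]
    by_cases h1 : σ = 1
    · subst h1; simp [hΛ1]
    · by_cases h2 : Λ σ = 0
      · simp [h1, h2]
      · simp [h1, h2]
  let Ψ : (IX K → ℂ) ≃ₗ[ℂ] (Gal(K/ℚ) → ℂ) := LinearEquiv.ofBijective (Psi φ) (Psi_bij φ)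
  have hΨ : ∀ y, Psi φ (Ψ.symm y) = y := fun y => Ψ.apply_symm_apply y
  obtain ⟨v, hv⟩ : ∃ v : Gal(K/ℚ) → IX K → ℂ, ∀ σ, v σ = Ψ.symm (Pi.single σ (cs σ)) := ⟨_, fun _ => rfl⟩
  have hPv : ∀ σ, Psi φ (v σ) = Pi.single σ (cs σ) := fun σ => by rw [hv, hΨ]
  -- constants
  obtain ⟨c0, hc0, hsieg⟩ := siegel K
  have hα0 : ∀ i, α i ≠ 0 := fun i h0 => Complex.exp_ne_zero (lam i) (by rw [← hα, h0, map_zero])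
  obtain ⟨n0, hn0, C0, hC0, hE⟩ := prodE α hα0
  have hH0 : 0 ≤ HH K := HH_nonneg
  obtain ⟨h0, hh0⟩ := exists_nat_ge (Fintype.card Gal(K/ℚ) *
    (HH K * HH K * ∑ i, ∑ ψ : K →+* ℂ, ‖rs ψ (β i)‖))
  obtain ⟨c, hc⟩ := exists_bound [1, c0, HH K, HH K * HH K * ∑ σ, ‖Λ σ‖, ∑ σ, ‖v σ‖,
    (∑ σ, ∑ ψ : K →+* ℂ, ‖rs ψ (es σ)‖) * HH K, h0 * Real.log n0, h0 * Real.log C0]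
  simp only [List.mem_cons, List.not_mem_nil, or_false, forall_eq_or_imp, forall_eq] at hc
  obtain ⟨hc1, hc2, hc3, hc4, hc5, hc6, hc7, hc8⟩ := hc
  have hc1' : 1 ≤ c := by exact_mod_cast hc1
  refine engine K φ (IX K) Gal(K/ℚ) (Module.finrank ℚ K) card_IX card_Gal Module.finrank_pos c hc1' ?_
    gm (LinearMap.toContinuousLinearMap ((LinearMap.proj 1 : (Gal(K/ℚ) → ℂ) →ₗ[ℂ] ℂ) ∘ₗ Psi φ)) ?_
    (lf φ Λ) ?_ ?_ ?_ v ?_ ?_ (fun σ => if σ = 1 then 1 else 0) ?_ ?_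
    (fun σ κ => es σ * sg σ (gm κ)) ?_ ?_ ?_
    (Ψ.symm (fun σ => if σ = 1 ∨ σ = σ0 then 1 else 0)) ?_ ?_
  · intro A B _ _ p hp hA hB a A' hA' hA1 hab
    obtain ⟨ξ, h1, h2, h3⟩ := hsieg A B p hp hA hB a A' hA' hA1 hab
    refine ⟨ξ, h1, h2, fun l ψ => (h3 l ψ).trans ?_⟩
    gcongr
  · intro s
    exact Psi_nat φ s 1
  · intro ψ S s hs
    exact (gm_bound ψ S s hs).trans (by gcongr)
  · intro x B hB hx
    exact (Psi_bound φ x B hB hx 1).trans (by gcongr)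
  · intro κ A x B hB hκ hx
    rw [lf_apply]
    refine (norm_sum_le _ _).trans ?_
    calc _ ≤ ∑ σ, (HH K * A) * ‖Λ σ‖ * (HH K * B) := by
          refine Finset.sum_le_sum fun σ _ => ?_
          rw [norm_mul, norm_mul]
          have h1 := gm_bound (φ.comp (σ : K →+* K)) A κ hκ
          have h2 := Psi_bound φ x B hB hx σ
          exact mul_le_mul (mul_le_mul_of_nonneg_right h1 (norm_nonneg _)) h2 (norm_nonneg _) (by positivity)
      _ = (HH K * HH K * ∑ σ, ‖Λ σ‖) * A * B := by
          rw [Finset.mul_sum, Finset.sum_mul, Finset.sum_mul]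
          exact Finset.sum_congr rfl fun σ _ => by ring
      _ ≤ c * A * B := by gcongr
  · intro σ
    exact (Finset.single_le_sum (f := fun σ => ‖v σ‖) (fun _ _ => norm_nonneg _) (Finset.mem_univ σ)).trans hc5
  · rw [eq_top_iff]
    intro x _
    have h1 : x = ∑ σ, (Psi φ x σ * (cs σ)⁻¹) • v σ := by
      apply (Psi_bij φ).1
      rw [map_sum]
      simp only [map_smul, hPv]
      funext τ
      simp [Finset.sum_apply, Pi.single_apply, hcs0]
    rw [h1]
    exact Submodule.sum_mem _ fun σ _ => Submodule.smul_mem _ _ (Submodule.subset_span ⟨σ, rfl⟩)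
  · intro σ ψ
    split_ifs <;> simp
  · intro σ
    change Psi φ (v σ) 1 = _
    rw [hPv]
    by_cases h1 : σ = 1
    · subst h1; simp [hcs]
    · simp [h1, Ne.symm h1, Pi.single_apply, eq_comm]
  · intro σ κ A ψ hκ
    rw [map_mul, norm_mul, rs_sg]
    have h1 := gm_bound (ψ.comp (σ : K →+* K)) A κ hκ
    have h2 := norm_le_sum2 (fun σ (ψ : K →+* ℂ) => ‖rs ψ (es σ)‖) (fun _ _ => norm_nonneg _) σ ψ
    calc _ ≤ (∑ σ, ∑ ψ : K →+* ℂ, ‖rs ψ (es σ)‖) * (HH K * A) :=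
          mul_le_mul h2 h1 (norm_nonneg _) (Finset.sum_nonneg fun _ _ => Finset.sum_nonneg fun _ _ => norm_nonneg _)
      _ = ((∑ σ, ∑ ψ : K →+* ℂ, ‖rs ψ (es σ)‖) * HH K) * A := by ring
      _ ≤ c * A := by gcongr
  · intro σ κ
    rw [lf_apply, hPv, Finset.sum_eq_single σ]
    · rw [map_mul, hescs, rs_sg, Pi.single_eq_same]
      change eg φ σ (gm κ) * Λ σ * cs σ = Λ σ * cs σ * eg φ σ (gm κ)
      ring
    · intro τ _ hτ; simp [Pi.single_apply, hτ]
    · simp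
  · intro L S
    have ht : ∀ κ s : IX K → ℕ, (∀ j, κ j < L) → (∀ j, s j < S) → ∀ i,
        |Algebra.trace ℤ (𝓞 K) (gm κ * gm s * β i)| ≤ ((h0*L*S : ℕ):ℤ) := by
      intro κ s hκ hs i
      have h1 := trace_eg φ (gm κ * gm s * β i)
      have h2 : ‖((Algebra.trace ℤ (𝓞 K) (gm κ * gm s * β i) : ℤ):ℂ)‖ ≤ ((h0*L*S:ℕ):ℝ) := by
        rw [← h1]
        refine (norm_sum_le _ _).trans ?_
        calc _ ≤ ∑ σ : Gal(K/ℚ), (HH K * L) * (HH K * S) * (∑ i, ∑ ψ : K →+* ℂ, ‖rs ψ (β i)‖) := by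
              refine Finset.sum_le_sum fun σ _ => ?_
              rw [map_mul, map_mul, norm_mul, norm_mul]
              have h1 := gm_bound (φ.comp (σ : K →+* K)) L κ hκ
              have h2 := gm_bound (φ.comp (σ : K →+* K)) S s hs
              have h3 := norm_le_sum2 (fun i (ψ : K →+* ℂ) => ‖rs ψ (β i)‖) (fun _ _ => norm_nonneg _) i
                (φ.comp (σ : K →+* K))
              exact mul_le_mul (mul_le_mul h1 h2 (norm_nonneg _) (by positivity)) h3 (norm_nonneg _) (by positivity)
          _ = (Fintype.card Gal(K/ℚ) * (HH K * HH K * ∑ i, ∑ ψ : K →+* ℂ, ‖rs ψ (β i)‖)) * L * S := by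
              rw [Finset.sum_const, Finset.card_univ, nsmul_eq_mul]; ring
          _ ≤ h0 * L * S := by gcongr
          _ = _ := by push_cast; ring
      rw [Complex.norm_intCast] at h2
      exact_mod_cast h2
    have hpow : ∀ x : ℝ, 1 ≤ x → h0 * Real.log x ≤ c → x^(h0*L*S) ≤ Real.exp (c*L*S) := by
      intro x hx hxc
      rw [← Real.exp_log (show 0 < x by linarith), ← Real.exp_nat_mul]
      refine Real.exp_le_exp.2 ?_
      calc ((h0*L*S:ℕ):ℝ) * Real.log x = h0 * Real.log x * L * S := by push_cast; ring
        _ ≤ c*L*S := by gcongr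
    refine ⟨(n0:ℂ)^(h0*L*S), fun κ s => if hh : (∀ j, κ j < L) ∧ (∀ j, s j < S) then
      Classical.choose (hE (h0*L*S) _ (ht κ s hh.1 hh.2)) else 0, ?_, ?_, ?_⟩
    · exact pow_ne_zero _ (by exact_mod_cast (by omega : n0 ≠ 0))
    · rw [norm_pow, Complex.norm_natCast]
      exact hpow _ (by exact_mod_cast hn0) hc7
    · intro κ s hκ hs
      simp only
      rw [dif_pos ⟨hκ, hs⟩]
      obtain ⟨h1, h2⟩ := Classical.choose_spec (hE (h0*L*S) _ (ht κ s hκ hs))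
      refine ⟨?_, fun ψ => (h2 ψ).trans (hpow _ hC0 hc8)⟩
      change φ (algebraMap (𝓞 K) K _) = _
      rw [h1, map_mul, map_pow, map_natCast, map_prod, lf_apply]
      congr 1
      have h3 : ∑ σ, eg φ σ (gm κ) * Λ σ * Psi φ (fun j => (s j:ℂ)) σ =
          ∑ σ, eg φ σ (gm κ * gm s) * Λ σ := by
        refine Finset.sum_congr rfl fun σ _ => ?_
        rw [Psi_nat, map_mul]; ring
      rw [h3, hlamT, Complex.exp_sum]
      refine Finset.prod_congr rfl fun i _ => ?_
      rw [map_zpow₀, hα, ← Complex.exp_int_mul]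
  · change Psi φ _ 1 = 1
    rw [hΨ]; simp
  · intro κ κ' hk
    have h1 : ∀ κ, lf φ Λ κ (Ψ.symm (fun σ => if σ = 1 ∨ σ = σ0 then 1 else 0)) = eg φ σ0 (gm κ) * Λ σ0 := by
      intro κ
      rw [lf_apply, hΨ, Finset.sum_eq_single σ0]
      · simp
      · intro τ _ hτ
        by_cases h1 : τ = 1
        · rw [h1] at hτ ⊢; simp [hσ01 (Ne.symm hτ)]
        · simp [h1, hτ]
      · simp
    simp only [h1] at hk
    exact gm_inj (eg_inj φ σ0 (mul_right_cancel₀ hσ0 hk))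

end core
end BK

namespace BK
open Polynomial in
theorem exists_gal (T : Finset ℂ) (hT : ∀ t ∈ T, IsAlgebraic ℚ t) :
    ∃ K : IntermediateField ℚ ℂ, FiniteDimensional ℚ K ∧ IsGalois ℚ K ∧ ∀ t ∈ T, t ∈ K := by
  set P : ℚ[X] := ∏ t ∈ T, minpoly ℚ t with hP
  have hP0 : P ≠ 0 := Finset.prod_ne_zero_iff.2 fun t ht => minpoly.ne_zero (hT t ht).isIntegral
  have hs : (P.map (algebraMap ℚ ℂ)).Splits := IsAlgClosed.splits _
  have hsp0 := IntermediateField.adjoin_rootSet_isSplittingField hs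
  have hsp : IsSplittingField ℚ (IntermediateField.adjoin ℚ (P.rootSet ℂ)) P := by
    convert hsp0
    exact Subsingleton.elim _ _
  refine ⟨IntermediateField.adjoin ℚ (P.rootSet ℂ), Polynomial.IsSplittingField.finiteDimensional _ P, ?_, ?_⟩
  · have : Normal ℚ (IntermediateField.adjoin ℚ (P.rootSet ℂ)) := Normal.of_isSplittingField P
    exact ⟨⟩
  · intro t ht
    apply IntermediateField.subset_adjoin
    rw [Polynomial.mem_rootSet]
    refine ⟨hP0, ?_⟩
    rw [hP, map_prod]
    exact Finset.prod_eq_zero ht (minpoly.aeval ℚ t)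

open NumberField in
theorem baker {I : Type} [Fintype I] (lam : I → ℂ) (hli : LinearIndependent ℚ lam)
    (halg : ∀ i, IsAlgebraic ℚ (Complex.exp (lam i))) (β : I → ℂ) (hβ : ∀ i, IsAlgebraic ℚ (β i))
    (β0 : ℂ) (hβ0 : IsAlgebraic ℚ β0) (h : ∑ i, β i * lam i = β0) : ∀ i, β i = 0 := by
  classical
  obtain ⟨K, hK1, hK2, hK⟩ := exists_gal (Finset.univ.image β ∪ Finset.univ.image (fun i => Complex.exp (lam i)) ∪ {β0})
    (by
      intro t ht
      simp only [Finset.mem_union, Finset.mem_image, Finset.mem_univ, true_and, Finset.mem_singleton] at ht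
      rcases ht with (⟨i, rfl⟩ | ⟨i, rfl⟩) | rfl
      · exact hβ i
      · exact halg i
      · exact hβ0)
  have hbK : ∀ i, β i ∈ K := fun i => hK _ (by simp)
  have heK : ∀ i, Complex.exp (lam i) ∈ K := fun i => hK _ (by simp)
  have hb0K : β0 ∈ K := hK _ (by simp)
  have : NumberField K := ⟨⟩
  choose n hn b hb using fun i => exists_nat_mul_int (K := K) ⟨β i, hbK i⟩
  obtain ⟨m, hm, c, hc⟩ := exists_nat_mul_int (K := K) ⟨β0, hb0K⟩
  have key := baker_core (K := K) K.val.toRingHom lam hli (fun i => ⟨_, heK i⟩) (fun i => rfl)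
    (fun i => (m : 𝓞 K) * (∏ j ∈ Finset.univ.erase i, (n j : 𝓞 K)) * b i) ((∏ j, (n j : 𝓞 K)) * c) ?_
  · intro i
    have h1 := key i
    have h2 : (b i) = 0 := by
      rcases mul_eq_zero.1 h1 with h3 | h3
      · exfalso
        rcases mul_eq_zero.1 h3 with h4 | h4
        · have : m = 0 := by exact_mod_cast h4
          omega
        · obtain ⟨j, _, hj⟩ := Finset.prod_eq_zero_iff.1 h4
          have : n j = 0 := by exact_mod_cast hj
          have := hn j
          omega
      · exact h3
    have h3 := hb i
    rw [h2, map_zero] at h3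
    rcases mul_eq_zero.1 h3.symm with h4 | h4
    · have : n i = 0 := by exact_mod_cast h4
      have := hn i
      omega
    · simpa using congrArg Subtype.val h4
  · have hb' : ∀ i, rs K.val.toRingHom (b i) = n i * β i := fun i => by
      change ((algebraMap (𝓞 K) K (b i) : K) : ℂ) = _
      rw [hb i]; simp
    have hc' : rs K.val.toRingHom c = m * β0 := by
      change ((algebraMap (𝓞 K) K c : K) : ℂ) = _
      rw [hc]; simp
    simp only [map_mul, map_prod, map_natCast, hb', hc']
    rw [← h, Finset.mul_sum, Finset.mul_sum]
    refine Finset.sum_congr rfl fun i _ => ?_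
    rw [← Finset.mul_prod_erase Finset.univ (fun j => (n j : ℂ)) (Finset.mem_univ i)]
    ring
end BK

namespace BK
open Filter Topology HurwitzZeta

lemma hasSum_shift (z E : ℂ) (u : ℕ → ℂ) (hu : u 0 = 0) (h : HasSum (fun n => z^n * u n) E) :
    HasSum (fun n : ℕ => z^(n+1) * (u (n+1) - u n)) ((1-z)*E) := by
  have h1 : HasSum (fun n : ℕ => z^(n+1) * u (n+1)) E := by
    have := (hasSum_nat_add_iff' (f := fun n => z^n * u n) 1).2 h
    simpa [hu] using this
  have h2 := h.mul_left z
  have h3 := h1.sub h2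
  have e1 : (fun n : ℕ => z^(n+1) * (u (n+1) - u n)) = fun b => z ^ (b + 1) * u (b + 1) - z * (z ^ b * u b) := by
    funext n; ring
  rw [e1, show (1-z)*E = E - z*E by ring]
  exact h3

lemma udiff_bound (n : ℕ) (s : ℝ) (hs : 1 ≤ s) (hs2 : s ≤ 2) :
    ‖(1 / ((n+1 : ℕ):ℂ)^(s:ℂ)) - 1 / ((n:ℕ):ℂ)^(s:ℂ)‖ ≤ 4 / ((n+1:ℕ):ℝ)^2 := by
  have e : ∀ m : ℕ, (1 / ((m : ℕ):ℂ)^(s:ℂ)) = ((1 / (m:ℝ)^s : ℝ) : ℂ) := by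
    intro m
    rw [Complex.ofReal_div, Complex.ofReal_cpow (by positivity)]
    simp
  rw [e, e, ← Complex.ofReal_sub, Complex.norm_real, Real.norm_eq_abs]
  rcases Nat.eq_zero_or_pos n with rfl | hn
  · have : (0:ℝ)^s = 0 := Real.zero_rpow (by linarith)
    simp [this]
  · have hn' : (1:ℝ) ≤ n := by exact_mod_cast hn
    have hn0 : (0:ℝ) < n := by linarith
    push_cast
    have h1 : (0:ℝ) < (n:ℝ)^s := by positivity
    have hN : (0:ℝ) < (n:ℝ)+1 := by linarith
    have h2 : (0:ℝ) < ((n:ℝ)+1)^s := by positivity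
    have h3 : (n:ℝ) ≤ (n:ℝ)^s := by
      calc (n:ℝ) = (n:ℝ)^(1:ℝ) := by simp
        _ ≤ _ := Real.rpow_le_rpow_of_exponent_le hn' hs
    have hB : 1 - s/(n+1) ≤ (n:ℝ)^s / ((n:ℝ)+1)^s := by
      rw [← Real.div_rpow hn0.le hN.le]
      have := one_add_mul_self_le_rpow_one_add (s := -1/((n:ℝ)+1)) (by
        rw [neg_div, neg_le_neg_iff, div_le_one hN]; linarith) hs
      have e1 : 1 + -1/((n:ℝ)+1) = n/((n:ℝ)+1) := by field_simp; ring
      rw [e1] at this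
      calc _ = 1 + s * (-1/((n:ℝ)+1)) := by ring
        _ ≤ _ := this
    have h4 : (n:ℝ)^s ≤ ((n:ℝ)+1)^s := Real.rpow_le_rpow hn0.le (by linarith) (by linarith)
    have h5 : 1/((n:ℝ)+1)^s ≤ 1/(n:ℝ)^s := one_div_le_one_div_of_le h1 h4
    rw [abs_of_nonpos (by linarith)]
    have h6 : -(1/((n:ℝ)+1)^s - 1/(n:ℝ)^s) = (1 - (n:ℝ)^s / ((n:ℝ)+1)^s) * (1/(n:ℝ)^s) := by
      field_simp; ring
    rw [h6]
    calc (1 - (n:ℝ)^s / ((n:ℝ)+1)^s) * (1/(n:ℝ)^s) ≤ (2/((n:ℝ)+1)) * (1/(n:ℝ)) := by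
          apply mul_le_mul
          · have : s/((n:ℝ)+1) ≤ 2/((n:ℝ)+1) := by gcongr
            linarith
          · exact one_div_le_one_div_of_le hn0 h3
          · positivity
          · positivity
      _ ≤ 4/((n:ℝ)+1)^2 := by
          rw [div_mul_div_comm, div_le_div_iff₀ (by positivity) (by positivity)]
          nlinarith

lemma summable_bd : Summable (fun n : ℕ => 4 / ((n+1:ℕ):ℝ)^2) := by
  have h : Summable (fun n : ℕ => 1 / (n:ℝ)^2) := Real.summable_one_div_nat_pow.2 (by norm_num)
  have := ((summable_nat_add_iff 1).2 h).mul_left 4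
  refine this.congr fun n => ?_
  ring

lemma slit_of (z : ℂ) (hz : ‖z‖ = 1) (hz1 : z ≠ 1) : 1 - z ∈ Complex.slitPlane := by
  left
  rw [Complex.sub_re, Complex.one_re]
  have h1 := Complex.abs_re_le_norm z
  have h2 : z.re ≤ 1 := by rw [← hz]; exact Complex.re_le_norm z
  rcases h2.lt_or_eq with h3 | h3
  · linarith
  · exfalso; apply hz1
    have h4 : z.re^2 + z.im^2 = 1 := by
      have := Complex.sq_norm z
      rw [Complex.normSq_apply, hz] at this; nlinarith
    have h5 : z.im = 0 := by nlinarith [sq_nonneg z.im]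
    exact Complex.ext (by simpa using h3) (by simpa using h5)

lemma one_limit (z : ℂ) (hz : ‖z‖ = 1) (hz1 : z ≠ 1) :
    (1 - z) * (-Complex.log (1-z)) = ∑' n : ℕ, z^(n+1) * (1/((n+1:ℕ):ℂ) - 1/(n:ℂ)) := by
  have hslit := slit_of z hz hz1
  have ht : Tendsto (fun r : ℝ => (r:ℂ) * z) (𝓝[<] 1) (𝓝 z) := by
    have : Tendsto (fun r : ℝ => (r:ℂ) * z) (𝓝 1) (𝓝 ((1:ℝ) * z)) :=
      (by fun_prop : Continuous fun r : ℝ => (r:ℂ) * z).tendsto 1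
    simpa using this.mono_left nhdsWithin_le_nhds
  have hL : Tendsto (fun r : ℝ => (1 - (r:ℂ)*z) * (-Complex.log (1 - (r:ℂ)*z))) (𝓝[<] 1)
      (𝓝 ((1-z) * (-Complex.log (1-z)))) := by
    have h1 : Tendsto (fun r : ℝ => 1 - (r:ℂ) * z) (𝓝[<] 1) (𝓝 (1-z)) := tendsto_const_nhds.sub ht
    exact h1.mul (h1.clog hslit).neg
  have hR : Tendsto (fun r : ℝ => ∑' n : ℕ, ((r:ℂ)*z)^(n+1) * (1/((n+1:ℕ):ℂ) - 1/(n:ℂ))) (𝓝[<] 1)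
      (𝓝 (∑' n : ℕ, z^(n+1) * (1/((n+1:ℕ):ℂ) - 1/(n:ℂ)))) := by
    refine tendsto_tsum_of_dominated_convergence summable_bd ?_ ?_
    · intro k
      exact (ht.pow _).mul_const _
    · have h0 : ∀ᶠ r : ℝ in 𝓝[<] 1, 0 < r := nhdsWithin_le_nhds (lt_mem_nhds one_pos)
      filter_upwards [h0, self_mem_nhdsWithin] with r hr hr1 k
      have hr1' : r < 1 := hr1
      have hb := udiff_bound k 1 le_rfl (by norm_num)
      simp only [Complex.ofReal_one, Complex.cpow_one] at hb
      rw [norm_mul, norm_pow, norm_mul, hz, mul_one, Complex.norm_real, Real.norm_of_nonneg hr.le]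
      calc _ ≤ 1 * _ := mul_le_mul_of_nonneg_right (pow_le_one₀ hr.le hr1'.le) (norm_nonneg _)
        _ ≤ _ := by rw [one_mul]; exact hb
  refine tendsto_nhds_unique hL (hR.congr' ?_)
  have h0 : ∀ᶠ r : ℝ in 𝓝[<] 1, 0 < r := nhdsWithin_le_nhds (lt_mem_nhds one_pos)
  filter_upwards [h0, self_mem_nhdsWithin] with r hr hr1
  have hr1' : r < 1 := hr1
  have hn : ‖(r:ℂ)*z‖ < 1 := by
    rw [norm_mul, hz, mul_one, Complex.norm_real, Real.norm_of_nonneg hr.le]; exact hr1'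
  have := Complex.hasSum_taylorSeries_neg_log hn
  have h2 := hasSum_shift ((r:ℂ)*z) _ (fun n => 1/(n:ℂ)) (by simp) (by
    convert this using 2; ring)
  exact h2.tsum_eq

lemma expZeta_one (a : ℝ) (ha : (a : UnitAddCircle) ≠ 0) (z : ℂ) (hz : z = Complex.exp (2 * Real.pi * Complex.I * a))
    (hz1 : z ≠ 1) : expZeta a 1 = -Complex.log (1 - z) := by
  have hzn : ‖z‖ = 1 := by
    rw [hz, show (2 * Real.pi * Complex.I * a : ℂ) = ((2*Real.pi*a : ℝ):ℂ) * Complex.I by push_cast; ring]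
    exact Complex.norm_exp_ofReal_mul_I _
  apply mul_left_cancel₀ (sub_ne_zero.2 hz1.symm)
  rw [one_limit z hzn hz1]
  have hc : Tendsto (fun s : ℝ => (s:ℂ)) (𝓝[>] 1) (𝓝 1) := by
    have : Tendsto (fun s : ℝ => (s:ℂ)) (𝓝 1) (𝓝 ((1:ℝ):ℂ)) := Complex.continuous_ofReal.tendsto 1
    simpa using this.mono_left nhdsWithin_le_nhds
  have hL : Tendsto (fun s : ℝ => (1 - z) * expZeta a (s:ℂ)) (𝓝[>] 1) (𝓝 ((1-z) * expZeta a 1)) := 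
    (((differentiable_expZeta_of_ne_zero ha).continuous.tendsto 1).comp hc).const_mul _
  have hR : Tendsto (fun s : ℝ => ∑' n : ℕ, z^(n+1) * (1/((n+1:ℕ):ℂ)^(s:ℂ) - 1/(n:ℂ)^(s:ℂ))) (𝓝[>] 1)
      (𝓝 (∑' n : ℕ, z^(n+1) * (1/((n+1:ℕ):ℂ) - 1/(n:ℂ)))) := by
    refine tendsto_tsum_of_dominated_convergence summable_bd ?_ ?_
    · intro k
      have h1 : ∀ m : ℕ, Tendsto (fun s : ℝ => 1/((m:ℕ):ℂ)^(s:ℂ)) (𝓝[>] 1) (𝓝 (1/(m:ℂ))) := by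
        intro m
        rcases Nat.eq_zero_or_pos m with rfl | hm
        · refine Tendsto.congr' (f₁ := fun _ => 0) ?_ (by simp)
          filter_upwards [self_mem_nhdsWithin] with s hs
          have hs' : (1:ℝ) < s := hs
          have : (s:ℂ) ≠ 0 := by exact_mod_cast (by linarith : s ≠ 0)
          simp [this]
        · have hm0 : (m:ℂ) ≠ 0 := by exact_mod_cast hm.ne'
          have h2 : Tendsto (fun s : ℝ => (m:ℂ)^(s:ℂ)) (𝓝[>] 1) (𝓝 ((m:ℂ)^(1:ℂ))) :=
            ((continuousAt_const_cpow hm0).tendsto (x := (1:ℂ))).comp hc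
          rw [Complex.cpow_one] at h2
          exact tendsto_const_nhds.div h2 hm0
      exact ((h1 (k+1)).sub (h1 k)).const_mul _
    · have h0 : ∀ᶠ r : ℝ in 𝓝[>] 1, r < 2 := nhdsWithin_le_nhds (gt_mem_nhds (by norm_num))
      filter_upwards [h0, self_mem_nhdsWithin] with s hs hs1 k
      have hs1' : 1 < s := hs1
      rw [norm_mul, norm_pow, hzn, one_pow, one_mul]
      exact udiff_bound k s hs1'.le hs.le
  refine tendsto_nhds_unique hL (hR.congr' ?_)
  filter_upwards [self_mem_nhdsWithin] with s hs1
  have hs1' : 1 < s := hs1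
  have := hasSum_expZeta_of_one_lt_re a (s := (s:ℂ)) (by simpa using hs1')
  have hs0 : (s:ℂ) ≠ 0 := by exact_mod_cast (by linarith : s ≠ 0)
  have h2 := hasSum_shift z _ (fun n => 1/(n:ℂ)^(s:ℂ)) (by simp [hs0]) (by
    convert this using 2 with n
    rw [hz, ← Complex.exp_nat_mul, mul_comm ((n:ℕ):ℂ)]; ring)
  exact h2.tsum_eq

lemma deriv_hze (a : UnitAddCircle) (ha : a ≠ 0) :
    HasDerivAt (hurwitzZetaEven a) (cosZeta a 1 / 2) 0 := by
  have hd : HasDerivAt (hurwitzZetaEven a) (deriv (hurwitzZetaEven a) 0) 0 :=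
    (differentiableAt_hurwitzZetaEven a (by norm_num)).hasDerivAt
  have h1 : HasDerivAt (fun s : ℂ => hurwitzZetaEven a (1 - s)) (-deriv (hurwitzZetaEven a) 0) 1 := by
    have h2 : HasDerivAt (fun s : ℂ => 1 - s) (-1) 1 := by
      simpa using (hasDerivAt_id (1:ℂ)).const_sub 1
    have := HasDerivAt.comp (h₂ := hurwitzZetaEven a) (h₂' := deriv (hurwitzZetaEven a) 0) (1:ℂ) (by rw [sub_self]; exact hd) h2
    simpa [Function.comp_def] using this
  have hpi : (2 * (Real.pi:ℂ)) ≠ 0 := by simp [Real.pi_ne_zero]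
  have hG : DifferentiableAt ℂ (fun s : ℂ => 2 * (2 * (Real.pi:ℂ)) ^ (-s) * Complex.Gamma s * cosZeta a s) 1 := by
    refine DifferentiableAt.mul (DifferentiableAt.mul (DifferentiableAt.mul (by fun_prop) ?_) ?_) ?_
    · exact (differentiable_id.neg.differentiableAt).const_cpow (Or.inl hpi)
    · refine Complex.differentiableAt_Gamma 1 fun m => ?_
      intro h
      have := congrArg Complex.re h
      simp at this
      have h3 : (0:ℝ) ≤ m := by positivity
      linarith
    · exact (differentiable_cosZeta_of_ne_zero ha) 1
  have hcos : HasDerivAt (fun s : ℂ => Complex.cos (Real.pi * s / 2)) (-(Real.pi/2)) 1 := by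
    have h3 : HasDerivAt (fun s : ℂ => (Real.pi:ℂ) * s / 2) (Real.pi/2) 1 := by
      simpa using ((hasDerivAt_id (1:ℂ)).const_mul (Real.pi:ℂ)).div_const 2
    have := h3.ccos
    simpa using this
  have h4 := hG.hasDerivAt.mul hcos
  have h5 : HasDerivAt (fun s : ℂ => hurwitzZetaEven a (1 - s))
      (2 * (2 * (Real.pi:ℂ)) ^ (-(1:ℂ)) * Complex.Gamma 1 * cosZeta a 1 * (-(Real.pi/2))) 1 := by
    have h6 : Complex.cos (Real.pi * 1 / 2) = 0 := by simp
    rw [h6, mul_zero, zero_add] at h4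
    refine h4.congr_of_eventuallyEq ?_
    have : ∀ᶠ s : ℂ in 𝓝 1, 0 < s.re := 
      (Complex.continuous_re.tendsto 1).eventually (lt_mem_nhds (by simp))
    filter_upwards [this] with s hs
    rw [hurwitzZetaEven_one_sub a (s := s) ?_ (Or.inl ha)]
    · simp only [Pi.mul_apply]; ring
    · intro m h
      rw [h] at hs
      simp at hs
      have h3 : (0:ℝ) ≤ m := by positivity
      linarith
  have h7 := h1.unique h5
  have hpi' : (Real.pi:ℂ) ≠ 0 := by simp [Real.pi_ne_zero]
  rw [Complex.cpow_neg_one, Complex.Gamma_one] at h7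
  have h8 : deriv (hurwitzZetaEven a) 0 = cosZeta a 1 / 2 := by
    have : deriv (hurwitzZetaEven a) 0 = -(2 * (2 * (Real.pi:ℂ))⁻¹ * 1 * cosZeta a 1 * (-(Real.pi/2))) := by
      rw [← h7]; ring
    rw [this]; field_simp
  rw [← h8]; exact hd
end BK

namespace BK
open Filter Topology HurwitzZeta

noncomputable def gl {N : ℕ} [NeZero N] (j : ZMod N) : ℝ := Real.log ‖1 - ZMod.stdAddChar j‖

lemma std_ne {N : ℕ} [NeZero N] {j : ZMod N} (hj : j ≠ 0) : ZMod.stdAddChar j ≠ 1 := fun h =>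
  hj (ZMod.injective_stdAddChar (by rw [h, AddChar.map_zero_eq_one]))

lemma gl_neg {N : ℕ} [NeZero N] (j : ZMod N) : gl (-j) = gl j := by
  rw [gl, gl, AddChar.map_neg_eq_conj, ← Complex.norm_conj (1 - ZMod.stdAddChar j)]
  simp

lemma expZeta_zmod {N : ℕ} [NeZero N] {j : ZMod N} (hj : j ≠ 0) :
    expZeta (ZMod.toAddCircle j) 1 = -Complex.log (1 - ZMod.stdAddChar j) := by
  obtain ⟨m, rfl⟩ := ZMod.intCast_surjective j
  have h0 : ZMod.toAddCircle ((m:ℤ) : ZMod N) ≠ 0 := fun h => hj (by simpa using h)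
  rw [ZMod.toAddCircle_intCast] at h0 ⊢
  refine expZeta_one _ h0 _ ?_ (std_ne hj)
  rw [ZMod.stdAddChar_coe]
  congr 1
  push_cast
  ring

lemma cosZeta_zmod {N : ℕ} [NeZero N] {j : ZMod N} (hj : j ≠ 0) :
    cosZeta (ZMod.toAddCircle j) 1 = -(gl j : ℂ) := by
  have h1 := expZeta_zmod hj
  have h2 := expZeta_zmod (neg_ne_zero.2 hj)
  have hs := slit_of (ZMod.stdAddChar j) (AddChar.norm_apply _ _) (std_ne hj)
  rw [AddChar.map_neg_eq_conj, show (1 - (starRingEnd ℂ) (ZMod.stdAddChar j)) = (starRingEnd ℂ) (1 - ZMod.stdAddChar j) by simp,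
    Complex.log_conj _ (Complex.slitPlane_arg_ne_pi hs)] at h2
  rw [expZeta, map_neg, cosZeta_neg, sinZeta_neg] at h2
  rw [expZeta] at h1
  have h3 := Complex.add_conj (Complex.log (1 - ZMod.stdAddChar j))
  rw [Complex.log_re] at h3
  have h4 : 2 * cosZeta (ZMod.toAddCircle j) 1 = 2 * -(gl j : ℂ) := by
    rw [gl]
    push_cast at h3
    linear_combination h1 + h2 - h3
  exact mul_left_cancel₀ two_ne_zero h4

lemma deriv_L {N : ℕ} [NeZero N] (Φ : ZMod N → ℂ) (he : Function.Even Φ) (h0 : Φ 0 = 0) :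
    deriv (ZMod.LFunction Φ) 0 = -(1/2) * ∑ j, Φ j * gl j := by
  have hN : (N:ℂ) ≠ 0 := by exact_mod_cast NeZero.ne N
  rw [show ZMod.LFunction Φ = fun s => (N:ℂ)^(-s) * ∑ j, Φ j * hurwitzZetaEven (ZMod.toAddCircle j) s from
    funext fun s => ZMod.LFunction_def_even he s]
  have hS : HasDerivAt (fun s => ∑ j, Φ j * hurwitzZetaEven (ZMod.toAddCircle j) s)
      (∑ j, Φ j * (-(1/2) * gl j)) 0 := by
    refine HasDerivAt.fun_sum fun j _ => ?_
    by_cases hj : j = 0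
    · subst hj; simp [h0, hasDerivAt_const]
    · have := deriv_hze (ZMod.toAddCircle j) (fun h => hj (by simpa using h))
      rw [cosZeta_zmod hj] at this
      rw [show Φ j * (-(1/2) * (gl j:ℂ)) = Φ j * (-(gl j:ℂ)/2) by ring]
      exact this.const_mul (Φ j)
  have hP : HasDerivAt (fun s : ℂ => (N:ℂ)^(-s)) (deriv (fun s : ℂ => (N:ℂ)^(-s)) 0) 0 :=
    ((differentiable_id.neg.differentiableAt).const_cpow (Or.inl hN)).hasDerivAt
  have hz : ∑ j, Φ j * hurwitzZetaEven (ZMod.toAddCircle j) 0 = 0 := by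
    refine Finset.sum_eq_zero fun j _ => ?_
    by_cases hj : j = 0
    · subst hj; simp [h0]
    · rw [hurwitzZetaEven_apply_zero, if_neg (fun h => hj (by simpa using h)), mul_zero]
  have := (hP.mul hS).deriv
  change deriv (fun s => (N:ℂ)^(-s) * ∑ j, Φ j * hurwitzZetaEven (ZMod.toAddCircle j) s) 0 = _ at this
  rw [this, hz, mul_zero, zero_add, neg_zero, Complex.cpow_zero, one_mul, Finset.mul_sum]
  exact Finset.sum_congr rfl fun j _ => by ring

open DirichletCharacter

lemma even_fun {N : ℕ} {χ : DirichletCharacter ℂ N} (h : χ.Even) : Function.Even (χ : ZMod N → ℂ) := fun j => by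
  rw [show -j = (-1) * j by ring, map_mul, h, one_mul]

lemma prim_ne {N : ℕ} [NeZero N] (χ : DirichletCharacter ℂ N) (hχ : χ.IsPrimitive) (he : χ.Even) (h1 : χ ≠ 1) :
    ∑ j, χ j * (gl j : ℂ) ≠ 0 := by
  have hN1 : N ≠ 1 := by
    rintro rfl
    exact h1 (Subsingleton.elim _ _)
  have : Fact (1 < N) := ⟨by have := NeZero.ne N; omega⟩
  have h0 : χ 0 = 0 := χ.map_zero
  have hE := ZMod.LFunction_dft (χ : ZMod N → ℂ) (s := 1) (Or.inl h0)
  have hsum : ∑ j, χ j * expZeta (ZMod.toAddCircle (-j)) 1 = ∑ j, χ j * (-(gl j:ℂ)) := by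
    have e2 : ∑ j, χ j * expZeta (ZMod.toAddCircle (-j)) 1 = ∑ j, χ j * expZeta (ZMod.toAddCircle j) 1 := by
      rw [← Equiv.sum_comp (Equiv.neg (ZMod N))]
      refine Finset.sum_congr rfl fun j _ => ?_
      simp only [Equiv.neg_apply, neg_neg]
      rw [even_fun he]
    have e3 : 2 * ∑ j, χ j * expZeta (ZMod.toAddCircle (-j)) 1 = 2 * ∑ j, χ j * (-(gl j:ℂ)) := by
      rw [two_mul]
      nth_rewrite 2 [e2]
      rw [← Finset.sum_add_distrib, Finset.mul_sum]
      refine Finset.sum_congr rfl fun j _ => ?_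
      by_cases hj : j = 0
      · subst hj; simp [h0]
      · rw [expZeta, expZeta, map_neg, cosZeta_neg, sinZeta_neg, cosZeta_zmod hj]; ring
    exact mul_left_cancel₀ two_ne_zero e3
  intro hcon
  have hz : ZMod.LFunction (ZMod.dft (χ : ZMod N → ℂ)) 1 = 0 := by
    rw [hE, hsum]
    simp only [mul_neg, Finset.sum_neg_distrib, hcon, neg_zero]
  have hf : ZMod.dft (χ : ZMod N → ℂ) = fun k => gaussSum χ ZMod.stdAddChar * χ⁻¹ k := by
    funext k
    rw [hχ.fourierTransform_eq_inv_mul_gaussSum, (even_fun (χ := χ⁻¹) ?_) k, mul_comm]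
    have he' : χ (-1) = 1 := he
    rw [DirichletCharacter.Even, MulChar.inv_apply_eq_inv, he', Ring.inverse_one]
  have hg : gaussSum χ ZMod.stdAddChar ≠ 0 := by
    intro hg
    rw [hg] at hf
    have : (χ : ZMod N → ℂ) = 0 := by
      apply ZMod.dft.injective
      rw [hf, map_zero]
      funext k; simp
    have := congrFun this 1
    simp at this
  have hL : ZMod.LFunction (ZMod.dft (χ : ZMod N → ℂ)) 1 = gaussSum χ ZMod.stdAddChar * LFunction χ⁻¹ 1 := by
    rw [hf, LFunction, ZMod.LFunction, ZMod.LFunction, Finset.mul_sum, Finset.mul_sum, Finset.mul_sum]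
    exact Finset.sum_congr rfl fun j _ => by ring
  rw [hL] at hz
  rcases mul_eq_zero.1 hz with h | h
  · exact hg h
  · exact LFunction_apply_one_ne_zero (inv_ne_one.2 h1) h

lemma char_ne {p n q : ℕ} [NeZero q] (hp : p.Prime) (hn : 1 ≤ n) (hq : q = p^n) (χ : DirichletCharacter ℂ q)
    (he : χ.Even) : ∑ j, χ j * (gl j : ℂ) ≠ 0 := by
  have hq1 : 1 < q := hq ▸ Nat.one_lt_pow (by omega) hp.one_lt
  have : Fact (1 < q) := ⟨hq1⟩
  have hD : deriv (ZMod.LFunction χ) 0 = -(1/2) * ∑ j, χ j * gl j := deriv_L _ (even_fun he) χ.map_zero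
  have hpf : q.primeFactors = {p} := by rw [hq]; exact Nat.primeFactors_prime_pow (by omega) hp
  by_cases h1 : χ = 1
  · intro hcon
    rw [hcon, mul_zero] at hD
    have e1 : (fun s => ZMod.LFunction χ s) =ᶠ[𝓝 0] fun s => (1 - (p:ℂ)^(-s)) * riemannZeta s := by
      have : ∀ᶠ s : ℂ in 𝓝 0, s ≠ 1 := isOpen_ne.mem_nhds (by norm_num)
      filter_upwards [this] with s hs
      have := LFunctionTrivChar_eq_mul_riemannZeta (N := q) hs
      rw [hpf, Finset.prod_singleton] at this
      rw [h1]
      exact this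
    have hp0 : (p:ℂ) ≠ 0 := by exact_mod_cast hp.ne_zero
    have h2 : HasDerivAt (fun s : ℂ => 1 - (p:ℂ)^(-s)) (Complex.log p) 0 := by
      have h3 := ((hasDerivAt_neg (0:ℂ)).const_cpow (c := (p:ℂ)) (Or.inl hp0)).const_sub 1
      simpa using h3
    have h4 := (h2.mul (differentiableAt_riemannZeta (s := 0) (by norm_num)).hasDerivAt).deriv
    have h5 : deriv (fun s => ZMod.LFunction χ s) 0 = _ := e1.deriv_eq.trans h4
    rw [hD] at h5
    simp only [neg_zero, Complex.cpow_zero, sub_self, zero_mul, add_zero, riemannZeta_zero] at h5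
    have h6 : Complex.log (p:ℂ) = ((Real.log p : ℝ) : ℂ) := by
      rw [Complex.ofReal_log (by positivity)]; simp
    rw [h6] at h5
    have h7 : 0 < Real.log p := Real.log_pos (by exact_mod_cast hp.one_lt)
    have h8 : ((Real.log p : ℝ) : ℂ) ≠ 0 := by exact_mod_cast h7.ne'
    exact mul_ne_zero h8 (by norm_num) h5.symm
  · have hcd : χ.conductor ∣ q := χ.conductor_dvd_level
    have hc0 : NeZero χ.conductor := ⟨fun h => by rw [h] at hcd; exact NeZero.ne q (Nat.eq_zero_of_zero_dvd hcd)⟩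
    have hch : changeLevel hcd χ.primitiveCharacter = χ := χ.changeLevel_primitiveCharacter
    have hp1 : χ.primitiveCharacter ≠ 1 := by
      intro h; rw [h, map_one] at hch; exact h1 hch.symm
    have hpe : χ.primitiveCharacter.Even := by
      have : χ (-1) = 1 := he
      rw [← hch] at this
      have hu : (-1 : ZMod q) = ((-1 : (ZMod q)ˣ) : ZMod q) := by simp
      rw [hu, changeLevel_eq_cast_of_dvd] at this
      rw [DirichletCharacter.Even, ← this]
      congr 1
      simp [ZMod.cast_neg hcd, ZMod.cast_one hcd]
    have hne := prim_ne _ χ.primitiveCharacter_isPrimitive hpe hp1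
    have hpc : p ∣ χ.conductor := by
      have h2 : χ.conductor ≠ 1 := fun h => h1 ((χ.eq_one_iff_conductor_eq_one).2 h)
      obtain ⟨k, hk, hk2⟩ := (Nat.dvd_prime_pow hp).1 (hcd.trans hq.dvd)
      rw [hk2] at h2 ⊢
      exact dvd_pow_self p (fun h => h2 (by rw [h, pow_zero]))
    have : Fact (1 < χ.conductor) := ⟨hp.one_lt.trans_le (Nat.le_of_dvd (Nat.pos_of_ne_zero (NeZero.ne _)) hpc)⟩
    have hEq : ZMod.LFunction (χ : ZMod q → ℂ) = ZMod.LFunction (χ.primitiveCharacter : ZMod χ.conductor → ℂ) := by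
      funext s
      have h3 := LFunction_changeLevel hcd χ.primitiveCharacter (s := s) (Or.inl hp1)
      rw [hch, hpf, Finset.prod_singleton] at h3
      have h4 : χ.primitiveCharacter (p : ZMod χ.conductor) = 0 := by
        apply MulChar.map_nonunit
        rw [ZMod.isUnit_iff_coprime]
        intro h
        exact hp.one_lt.ne' (Nat.Coprime.eq_one_of_dvd h hpc)
      rw [h4, zero_mul, sub_zero, mul_one] at h3
      exact h3
    rw [hEq, deriv_L _ (even_fun hpe) (MulChar.map_zero _)] at hD
    intro hcon
    rw [hcon, mul_zero] at hD
    rcases mul_eq_zero.1 hD with h | h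
    · norm_num at h
    · exact hne h
end BK

namespace BK
open DirichletCharacter

lemma unit_ne {q : ℕ} (hq1 : 1 < q) (u : (ZMod q)ˣ) : (u : ZMod q) ≠ 0 := by
  have : Fact (1 < q) := ⟨hq1⟩
  exact u.ne_zero

lemma sum_units {q : ℕ} [NeZero q] (F : ZMod q → ℂ) (hF : ∀ j, ¬ IsUnit j → F j = 0) :
    ∑ j, F j = ∑ u : (ZMod q)ˣ, F u := by
  symm
  refine Fintype.sum_of_injective (fun u : (ZMod q)ˣ => (u : ZMod q)) Units.val_injective _ _ ?_ (fun _ => rfl)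
  intro j hj
  refine hF j fun hu => hj ?_
  obtain ⟨u, rfl⟩ := hu
  exact ⟨u, rfl⟩

lemma prim_std {q : ℕ} [NeZero q] (b : (ZMod q)ˣ) : IsPrimitiveRoot (ZMod.stdAddChar (b : ZMod q)) q := by
  have h1 : IsPrimitiveRoot (ZMod.stdAddChar (1 : ZMod q)) q := by
    have := ZMod.stdAddChar_coe (N := q) 1
    rw [Int.cast_one] at this
    rw [this]
    simpa using Complex.isPrimitiveRoot_exp q (NeZero.ne q)
  have h2 : ZMod.stdAddChar (b : ZMod q) = ZMod.stdAddChar (1 : ZMod q) ^ (b : ZMod q).val := by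
    rw [← AddChar.map_nsmul_eq_pow, nsmul_one, ZMod.natCast_zmod_val]
  rw [h2]
  exact h1.pow_of_coprime _ (ZMod.val_coe_unit_coprime b)

open Polynomial in
noncomputable def PP {q : ℕ} [NeZero q] (A : (ZMod q)ˣ → ℕ) : ℤ[X] :=
  ∏ u : (ZMod q)ˣ, ((1 - X^(u : ZMod q).val) * (1 - X^(-(u : ZMod q)).val))^(A u)

open Polynomial in
lemma aeval_PP {q : ℕ} [NeZero q] (hq1 : 1 < q) (A : (ZMod q)ˣ → ℕ) (b : (ZMod q)ˣ) :
    aeval (ZMod.stdAddChar (b : ZMod q)) (PP A) = ((Real.exp (2 * ∑ u, A u * gl (b * u : ZMod q)) : ℝ) : ℂ) := by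
  have h2 : ∀ u : ZMod q, ZMod.stdAddChar (b : ZMod q) ^ u.val = ZMod.stdAddChar (b * u : ZMod q) := by
    intro u
    rw [← AddChar.map_nsmul_eq_pow, nsmul_eq_mul, ZMod.natCast_zmod_val, mul_comm]
  rw [PP, map_prod, Finset.mul_sum, Real.exp_sum, Complex.ofReal_prod]
  refine Finset.prod_congr rfl fun u _ => ?_
  simp only [map_pow, map_mul, map_sub, map_one, aeval_X, h2]
  rw [mul_neg, AddChar.map_neg_eq_conj]
  have hne : 1 - ZMod.stdAddChar ((b:ZMod q) * (u:ZMod q)) ≠ 0 := by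
    refine sub_ne_zero.2 (std_ne ?_).symm
    exact_mod_cast unit_ne hq1 (b*u)
  rw [show 1 - (starRingEnd ℂ) (ZMod.stdAddChar ((b:ZMod q) * (u:ZMod q))) = (starRingEnd ℂ) (1 - ZMod.stdAddChar ((b:ZMod q) * (u:ZMod q))) by simp,
    Complex.mul_conj, Complex.normSq_eq_norm_sq, gl]
  rw [show 2 * ((A u : ℝ) * Real.log ‖1 - ZMod.stdAddChar ((b:ZMod q) * (u:ZMod q))‖) = ((2 * A u : ℕ) : ℝ) * Real.log ‖1 - ZMod.stdAddChar ((b:ZMod q) * (u:ZMod q))‖ by push_cast; ring,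
    Real.exp_nat_mul, Real.exp_log (norm_pos_iff.2 hne), pow_mul]
  push_cast
  rfl

lemma gal_rel {q : ℕ} [NeZero q] (hq1 : 1 < q) (c : (ZMod q)ˣ → ℤ)
    (h : ∑ u, (c u : ℝ) * gl (u : ZMod q) = 0) (b : (ZMod q)ˣ) :
    ∑ u, (c u : ℝ) * gl (b * u : ZMod q) = 0 := by
  set A : (ZMod q)ˣ → ℕ := fun u => (c u).toNat with hA
  set B : (ZMod q)ˣ → ℕ := fun u => (-c u).toNat with hB
  have hAB : ∀ u, (c u : ℝ) = (A u : ℝ) - B u := by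
    intro u
    have : c u = (A u : ℤ) - B u := by simp only [hA, hB]; omega
    rw [this]; push_cast; ring
  have hs : ∀ b : (ZMod q)ˣ, ∑ u, (c u : ℝ) * gl (b * u : ZMod q)
      = ∑ u, A u * gl (b * u : ZMod q) - ∑ u, B u * gl (b * u : ZMod q) := by
    intro b
    rw [← Finset.sum_sub_distrib]
    exact Finset.sum_congr rfl fun u _ => by rw [hAB]; ring
  have h1 := hs 1
  simp only [Units.val_one, one_mul] at h1
  rw [h] at h1
  have h2 : Polynomial.aeval (ZMod.stdAddChar ((1 : (ZMod q)ˣ) : ZMod q)) (PP A - PP B) = 0 := by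
    rw [map_sub, aeval_PP hq1, aeval_PP hq1]
    simp only [Units.val_one, one_mul]
    rw [sub_eq_zero.1 h1.symm, sub_self]
  have hq0 : 0 < q := by omega
  have h3 := minpoly.isIntegrallyClosed_dvd ((prim_std (1 : (ZMod q)ˣ)).isIntegral hq0) h2
  rw [← Polynomial.cyclotomic_eq_minpoly (prim_std (1 : (ZMod q)ˣ)) hq0,
    Polynomial.cyclotomic_eq_minpoly (prim_std b) hq0] at h3
  obtain ⟨Q, hQ⟩ := h3
  have h4 : Polynomial.aeval (ZMod.stdAddChar (b : ZMod q)) (PP A - PP B) = 0 := by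
    rw [hQ, map_mul, minpoly.aeval, zero_mul]
  rw [map_sub, aeval_PP hq1, aeval_PP hq1, sub_eq_zero] at h4
  have h5 := Real.exp_injective (Complex.ofReal_injective h4)
  rw [hs b]
  linarith

lemma fourier_zero {p n q : ℕ} [NeZero q] (hp : p.Prime) (hn : 1 ≤ n) (hq : q = p^n)
    (c : (ZMod q)ˣ → ℂ) (he : ∀ u, c (-u) = c u)
    (h : ∀ b : (ZMod q)ˣ, ∑ u : (ZMod q)ˣ, c u * gl (b * u : ZMod q) = 0) : ∀ u, c u = 0 := by
  have hq1 : 1 < q := hq ▸ Nat.one_lt_pow (by omega) hp.one_lt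
  have hev : ∀ χ : DirichletCharacter ℂ q, χ.Even → ∑ u, c u * χ⁻¹ (u : ZMod q) = 0 := by
    intro χ hχ
    have h1 := char_ne hp hn hq χ hχ
    rw [sum_units _ (fun j hj => by rw [χ.map_nonunit hj, zero_mul])] at h1
    have h2 : ∑ b : (ZMod q)ˣ, χ b * ∑ u : (ZMod q)ˣ, c u * gl (b * u : ZMod q) = 0 :=
      Finset.sum_eq_zero fun b _ => by rw [h b, mul_zero]
    have h3 : ∑ b : (ZMod q)ˣ, χ b * ∑ u : (ZMod q)ˣ, c u * gl (b * u : ZMod q)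
        = (∑ u, c u * χ⁻¹ (u : ZMod q)) * ∑ u : (ZMod q)ˣ, χ u * gl (u : ZMod q) := by
      rw [Finset.sum_mul]
      simp only [Finset.mul_sum]
      rw [Finset.sum_comm]
      refine Finset.sum_congr rfl fun u _ => ?_
      rw [← Equiv.sum_comp (Equiv.mulRight u⁻¹)]
      refine Finset.sum_congr rfl fun v _ => ?_
      simp only [Equiv.coe_mulRight]
      rw [MulChar.inv_apply, Ring.inverse_unit, Units.val_mul, map_mul, mul_assoc (v : ZMod q), Units.inv_mul, mul_one]
      ring
    rw [h3] at h2
    exact (mul_eq_zero.1 h2).resolve_right h1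
  have hall : ∀ χ : DirichletCharacter ℂ q, ∑ u, c u * χ (u : ZMod q) = 0 := by
    intro χ
    rcases χ.even_or_odd with h1 | h1
    · have := hev χ⁻¹ (by
        have h1' : χ (-1) = 1 := h1
        rw [DirichletCharacter.Even, MulChar.inv_apply_eq_inv, h1', Ring.inverse_one])
      rwa [inv_inv] at this
    · have h2 : ∑ u, c u * χ (u : ZMod q) = -∑ u, c u * χ (u : ZMod q) := by
        conv_lhs => rw [← Equiv.sum_comp (Equiv.neg _)]
        rw [← Finset.sum_neg_distrib]
        refine Finset.sum_congr rfl fun u _ => ?_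
        rw [Equiv.neg_apply, he, Units.val_neg, show -(u : ZMod q) = (-1) * u by ring, map_mul, h1]
        ring
      have h3 : (2:ℂ) * ∑ u, c u * χ (u : ZMod q) = 0 := by linear_combination h2
      exact (mul_eq_zero.1 h3).resolve_left two_ne_zero
  intro a
  have h1 : ∑ χ : DirichletCharacter ℂ q, χ ((a : ZMod q)⁻¹) * ∑ u, c u * χ (u : ZMod q) = 0 :=
    Finset.sum_eq_zero fun χ _ => by rw [hall, mul_zero]
  have h2 : ∑ χ : DirichletCharacter ℂ q, χ ((a : ZMod q)⁻¹) * ∑ u, c u * χ (u : ZMod q)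
      = ∑ u, c u * ∑ χ : DirichletCharacter ℂ q, χ ((a : ZMod q)⁻¹) * χ (u : ZMod q) := by
    simp only [Finset.mul_sum]
    rw [Finset.sum_comm]
    exact Finset.sum_congr rfl fun u _ => Finset.sum_congr rfl fun χ _ => by ring
  rw [h2] at h1
  simp only [sum_char_inv_mul_char_eq ℂ a.isUnit] at h1
  rw [Finset.sum_eq_single a] at h1
  · rw [if_pos rfl] at h1
    refine (mul_eq_zero.1 h1).resolve_right ?_
    exact_mod_cast (Nat.totient_pos.2 (by omega)).ne'
  · intro u _ hu
    rw [if_neg (fun hh => hu (Units.ext hh.symm)), mul_zero]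
  · simp

lemma indep {p n q : ℕ} [NeZero q] (hp : p.Prime) (hn : 1 ≤ n) (hq : q = p^n) (c : (ZMod q)ˣ → ℤ)
    (h : ∑ u, (c u : ℝ) * gl (u : ZMod q) = 0) (u : (ZMod q)ˣ) : c u + c (-u) = 0 := by
  have hq1 : 1 < q := hq ▸ Nat.one_lt_pow (by omega) hp.one_lt
  have h1 := gal_rel hq1 c h
  have := fourier_zero hp hn hq (fun u => (c u : ℂ) + c (-u)) (fun u => by rw [neg_neg, add_comm]) ?_ u
  · exact_mod_cast this
  · intro b
    have e1 : ∑ u : (ZMod q)ˣ, (c u : ℂ) * gl (b * u : ZMod q) = 0 := by exact_mod_cast h1 b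
    have e2 : ∑ u : (ZMod q)ˣ, (c (-u) : ℂ) * gl (b * u : ZMod q) = 0 := by
      rw [← e1, ← Equiv.sum_comp (Equiv.neg _)]
      refine Finset.sum_congr rfl fun v _ => ?_
      rw [Equiv.neg_apply, neg_neg, Units.val_neg, mul_neg, gl_neg]
    simp only [add_mul]
    rw [Finset.sum_add_distrib, e1, e2, add_zero]

lemma isAlg_norm {q : ℕ} [NeZero q] (hq1 : 1 < q) (u : (ZMod q)ˣ) : IsAlgebraic ℚ (Complex.exp (gl (u : ZMod q) : ℂ)) := by
  have hq0 : 0 < q := by omega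
  have hne : 1 - ZMod.stdAddChar (u:ZMod q) ≠ 0 := sub_ne_zero.2 (std_ne (unit_ne hq1 u)).symm
  have hz : ∀ v : (ZMod q)ˣ, IsAlgebraic ℚ (1 - ZMod.stdAddChar (v : ZMod q)) := fun v =>
    (isAlgebraic_one).sub ((prim_std v).isIntegral hq0).tower_top.isAlgebraic
  have h1 : Complex.exp (gl (u : ZMod q) : ℂ) ^ 2 = (1 - ZMod.stdAddChar (u:ZMod q)) * (1 - ZMod.stdAddChar ((-u : (ZMod q)ˣ):ZMod q)) := by
    rw [Units.val_neg, AddChar.map_neg_eq_conj, show 1 - (starRingEnd ℂ) (ZMod.stdAddChar (u:ZMod q)) = (starRingEnd ℂ) (1 - ZMod.stdAddChar (u:ZMod q)) by simp,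
    Complex.mul_conj, Complex.normSq_eq_norm_sq, gl, ← Complex.ofReal_exp, Real.exp_log (norm_pos_iff.2 hne)]
    push_cast; rfl
  refine IsAlgebraic.of_pow (n := 2) (by norm_num) ?_
  rw [h1]
  exact (hz _).mul (hz _)

theorem main_units {p n q : ℕ} [NeZero q] (hp : p.Prime) (hn : 1 ≤ n) (hq : q = p^n) (Φ : (ZMod q)ˣ → ℂ)
    (he : ∀ u, Φ (-u) = Φ u) (ha : ∀ u, IsAlgebraic ℚ (Φ u))
    (h : IsAlgebraic ℚ (∑ u : (ZMod q)ˣ, Φ u * gl (u : ZMod q))) : ∀ u, Φ u = 0 := by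
  classical
  have hq1 : 1 < q := hq ▸ Nat.one_lt_pow (by omega) hp.one_lt
  let S : Setoid (ZMod q)ˣ := ⟨fun u v => u = v ∨ u = -v, ⟨fun u => Or.inl rfl, by
    rintro u v (h | h)
    · exact Or.inl h.symm
    · exact Or.inr (by rw [h, neg_neg]), by
    rintro u v w (h | h) (h' | h')
    · exact Or.inl (h.trans h')
    · exact Or.inr (h.trans h')
    · exact Or.inr (by rw [h, h'])
    · exact Or.inl (by rw [h, h', neg_neg])⟩⟩
  let I := Quotient S
  have : Finite I := inferInstance
  have : Fintype I := Fintype.ofFinite I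
  let mk : (ZMod q)ˣ → I := fun u => Quotient.mk S u
  have hmk : ∀ u, u = (mk u).out ∨ u = -(mk u).out := fun u => Setoid.symm (Quotient.mk_out u)
  have hmo : ∀ i : I, mk i.out = i := fun i => Quotient.out_eq i
  have hmn : ∀ u, mk (-u) = mk u := fun u => Quotient.sound (Or.inr rfl)
  have hgl : ∀ u : (ZMod q)ˣ, gl (u : ZMod q) = gl ((mk u).out : ZMod q) := by
    intro u
    rcases hmk u with h1 | h1
    · rw [← h1]
    · conv_lhs => rw [h1, Units.val_neg, gl_neg]
  have hΦ : ∀ u, Φ u = Φ ((mk u).out) := by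
    intro u
    rcases hmk u with h1 | h1
    · rw [← h1]
    · conv_lhs => rw [h1, he]
  have hsum : ∑ u : (ZMod q)ˣ, Φ u * gl (u : ZMod q) =
      ∑ i : I, (((Finset.univ.filter fun u => mk u = i).card : ℂ) * Φ i.out) * (gl (i.out : ZMod q) : ℂ) := by
    rw [← Finset.sum_fiberwise Finset.univ mk]
    refine Finset.sum_congr rfl fun i _ => ?_
    rw [Finset.sum_congr rfl (g := fun _ => Φ i.out * (gl (i.out : ZMod q) : ℂ))]
    · rw [Finset.sum_const, nsmul_eq_mul, mul_assoc]
    · intro u hu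
      have : mk u = i := (Finset.mem_filter.1 hu).2
      rw [hΦ u, hgl u, this]
  have hli : LinearIndependent ℚ (fun i : I => (gl (i.out : ZMod q) : ℂ)) := by
    rw [← LinearIndependent.iff_fractionRing ℤ ℚ, Fintype.linearIndependent_iff]
    intro c hc i
    have h1 : ∑ u : (ZMod q)ˣ, (((if u = (mk u).out then c (mk u) else 0 : ℤ)) : ℝ) * gl (u : ZMod q) = 0 := by
      have h2 : ∑ i : I, (c i : ℝ) * gl (i.out : ZMod q) = 0 := by
        simp only [zsmul_eq_mul] at hc
        exact_mod_cast hc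
      rw [← h2]
      symm
      refine Fintype.sum_of_injective (fun i : I => i.out) (fun i j hij => by
        rw [← hmo i, ← hmo j]; exact congrArg mk hij) _ _ ?_ ?_
      · intro u hu
        rw [if_neg (fun hh => hu ⟨mk u, hh.symm⟩)]; simp
      · intro i
        simp only [hmo, if_true]
    have h2 := indep hp hn hq (fun u => if u = (mk u).out then c (mk u) else 0) h1 i.out
    simp only [hmn, hmo, if_true] at h2
    split_ifs at h2 <;> omega
  have hb := baker _ hli (fun i => isAlg_norm hq1 i.out)
    (fun i : I => ((Finset.univ.filter fun u => mk u = i).card : ℂ) * Φ i.out)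
    (fun i => (isAlgebraic_natCast _).mul (ha _)) _ h hsum.symm
  intro u
  have h1 := hb (mk u)
  rw [hΦ u]
  refine (mul_eq_zero.1 h1).resolve_left ?_
  have : 0 < (Finset.univ.filter fun v => mk v = mk u).card := Finset.card_pos.2 ⟨u, by simp⟩
  exact_mod_cast this.ne'
end BK

lemma BK.per_cast {q : ℕ} [NeZero q] (f : ℤ → ℂ) (hper : ∀ m : ℤ, f (m + q) = f m) (m : ℤ) :
    f (((m : ZMod q)).val : ℤ) = f m := by
  have h1 : Function.Periodic f (q:ℤ) := hper
  rw [ZMod.val_intCast, Int.emod_def]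
  have := h1.sub_int_mul_eq (x := m) (n := m / q)
  rw [← this, mul_comm]
  simp

lemma BK.Lderiv_eq {q : ℕ} [NeZero q] (f : ℤ → ℂ) (hper : ∀ m : ℤ, f (m + q) = f m) :
    Lderiv0 q f = deriv (ZMod.LFunction (fun j : ZMod q => f (j.val : ℤ))) 0 := by
  rw [Lderiv0]
  congr 1
  funext s
  rw [ZMod.LFunction]
  congr 1
  have hq0 : 0 < q := Nat.pos_of_ne_zero (NeZero.ne q)
  refine Finset.sum_nbij (fun a : ℕ => (a : ZMod q)) (fun _ _ => Finset.mem_univ _) ?_ ?_ ?_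
  · intro a ha b hb hab
    simp only [Finset.coe_Icc, Set.mem_Icc] at ha hb
    have h1 := (ZMod.natCast_eq_natCast_iff' a b q).1 hab
    rcases ha.2.lt_or_eq with h2 | h2 <;> rcases hb.2.lt_or_eq with h3 | h3
    · rwa [Nat.mod_eq_of_lt h2, Nat.mod_eq_of_lt h3] at h1
    · rw [Nat.mod_eq_of_lt h2, h3, Nat.mod_self] at h1; omega
    · rw [Nat.mod_eq_of_lt h3, h2, Nat.mod_self] at h1; omega
    · omega
  · intro j _
    have hv := ZMod.val_lt j
    by_cases hj : j.val = 0
    · refine ⟨q, by simp; omega, ?_⟩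
      have : j = 0 := (ZMod.val_eq_zero j).1 hj
      simp [this]
    · exact ⟨j.val, by simp only [Finset.coe_Icc, Set.mem_Icc]; omega, ZMod.natCast_zmod_val j⟩
  · intro a _
    have h1 := BK.per_cast f hper (a : ℤ)
    have h2 := ZMod.toAddCircle_intCast (N := q) (a : ℤ)
    push_cast at h1 h2
    simp only [h1, h2]

theorem stmt3 (q p n : ℕ) (hp : p.Prime) (hn : 1 ≤ n) (hq : q = p ^ n) (hq1 : 1 < q)
    (f : ℤ → ℂ)
    (hper : ∀ m : ℤ, f (m + q) = f m)
    (heven : ∀ m : ℤ, f (-m) = f m)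
    (hdir : ∀ m : ℤ, Int.gcd m q ≠ 1 → f m = 0)
    (halg : ∀ m : ℤ, IsAlgebraic ℚ (f m)) :
    Transcendental ℚ (Lderiv0 q f) ↔ ¬ (∀ m : ℤ, f m = 0) := by
  have hne : NeZero q := ⟨by omega⟩
  have hpc := BK.per_cast (q := q) f hper
  constructor
  · intro h h0
    apply h
    have : Lderiv0 q f = 0 := by simp [Lderiv0, h0]
    rw [this]
    exact isAlgebraic_zero
  · intro h hcon
    apply h
    set Φ : ZMod q → ℂ := fun j => f (j.val : ℤ) with hΦ
    have hΦe : ∀ j, Φ (-j) = Φ j := by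
      intro j
      obtain ⟨m, rfl⟩ := ZMod.intCast_surjective j
      have h1 := hpc (-m)
      rw [Int.cast_neg] at h1
      simp only [hΦ]
      rw [h1, hpc, heven]
    have hΦu : ∀ j, ¬ IsUnit j → Φ j = 0 := by
      intro j hj
      apply hdir
      intro hg
      apply hj
      rw [← ZMod.natCast_zmod_val j, ZMod.isUnit_iff_coprime]
      exact_mod_cast hg
    have hΦ0 : Φ 0 = 0 := by
      have : Fact (1 < q) := ⟨hq1⟩
      exact hΦu 0 not_isUnit_zero
    rw [BK.Lderiv_eq f hper, BK.deriv_L _ hΦe hΦ0] at hcon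
    have h2 : IsAlgebraic ℚ (∑ j, Φ j * (BK.gl j : ℂ)) := by
      have h3 : ∑ j, Φ j * (BK.gl j : ℂ) = ((-2 : ℤ) : ℂ) * (-(1/2) * ∑ j, Φ j * (BK.gl j : ℂ)) := by
        push_cast; ring
      rw [h3]
      exact (isAlgebraic_intCast _).mul hcon
    rw [BK.sum_units _ (fun j hj => by rw [hΦu j hj, zero_mul])] at h2
    have h4 := BK.main_units hp hn hq (fun u => Φ u) (fun u => by rw [Units.val_neg, hΦe])
      (fun u => halg _) h2
    intro m
    rw [← hpc m]
    change Φ (m : ZMod q) = 0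
    by_cases hu : IsUnit (m : ZMod q)
    · obtain ⟨u, hu⟩ := hu
      rw [← hu]; exact h4 u
    · exact hΦu _ hu
end

section
/- Let q = 155 and let χ₀ be the non-principal real Dirichlet character modulo 5 with χ₀(1) = χ₀(4) = 1 and χ₀(2) = χ₀(3) = -1, extended to odd n coprime to 155 by χ(n) = χ₀(n mod 5) (χ is even and well defined on residues modulo 155 up to sign). Then ∑_{2 ≤ s ≤ 77, gcd(s,155)=1} (χ(s) - 1) · log(2 sin(sπ/155)) = 0; in particular, the numbers log(2 sin(sπ/155)), for 2 ≤ s ≤ 77 with gcd(s,155) = 1, are linearly dependent over the field of algebraic numbers. -/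
open scoped Real

/-- The even character modulo `155` induced by the non-principal real character `χ₀` mod `5`
(with `χ₀(1) = χ₀(4) = 1` and `χ₀(2) = χ₀(3) = -1`): `χ(s) = χ₀(s mod 5)`. -/
noncomputable def chi155 (s : ℕ) : ℝ :=
  if s % 5 = 1 ∨ s % 5 = 4 then 1 else if s % 5 = 2 ∨ s % 5 = 3 then -1 else 0

lemma norm_aux (t : ℝ) : ‖(1 : ℂ) - Complex.exp ((2 * t : ℝ) * Complex.I)‖ = |2 * Real.sin t| := by
  have h : (1 : ℂ) - Complex.exp ((2 * t : ℝ) * Complex.I)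
      = Complex.exp ((t : ℝ) * Complex.I) * (((-2 * Real.sin t : ℝ) : ℂ) * Complex.I) := by
    have h2 : Complex.exp ((2 * t : ℝ) * Complex.I) = Complex.exp ((t : ℝ) * Complex.I) ^ 2 := by
      rw [← Complex.exp_nat_mul]; congr 1; push_cast; ring
    rw [h2, Complex.exp_mul_I]
    push_cast
    have := Complex.sin_sq_add_cos_sq (t : ℂ)
    linear_combination (-1 : ℂ) * this + (Complex.sin t ^ 2) * Complex.I_sq
  rw [h, norm_mul, Complex.norm_exp_ofReal_mul_I, norm_mul, Complex.norm_I, Complex.norm_real,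
    Real.norm_eq_abs, neg_mul, abs_neg]
  ring

lemma prod_aux : ∏ k ∈ Finset.range 31, |2 * Real.sin (((5 * k + 2 : ℕ) : ℝ) * π / 155)|
    = |2 * Real.sin (((62 : ℕ) : ℝ) * π / 155)| := by
  have hz := Complex.isPrimitiveRoot_exp 31 (by norm_num)
  have h := X_pow_sub_C_eq_prod hz (by norm_num)
    (α := Complex.exp ((2 * (2 * π / 155) : ℝ) * Complex.I)) rfl
  have h1 := congrArg (fun p => ‖Polynomial.eval 1 p‖) h
  simp only [Polynomial.eval_prod, Polynomial.eval_sub, Polynomial.eval_pow, Polynomial.eval_X,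
    Polynomial.eval_C, norm_prod, one_pow] at h1
  rw [← norm_aux]
  rw [← Complex.exp_nat_mul] at h1
  trans ‖(1 : ℂ) - Complex.exp ((31 : ℕ) * ((2 * (2 * π / 155) : ℝ) * Complex.I))‖
  · rw [h1]
    refine Finset.prod_congr rfl fun k _ => ?_
    rw [← norm_aux, ← Complex.exp_nat_mul, ← Complex.exp_add]
    congr 3
    push_cast
    ring
  · congr 3
    push_cast
    ring

lemma sin_pos_aux (s : ℕ) (h0 : 0 < s) (h1 : s < 155) :
    0 < 2 * Real.sin ((s : ℝ) * π / 155) := by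
  have h0' : (0 : ℝ) < s := by exact_mod_cast h0
  have h1' : (s : ℝ) < 155 := by exact_mod_cast h1
  have := Real.sin_pos_of_pos_of_lt_pi (x := (s : ℝ) * π / 155) (by positivity)
    (by rw [div_lt_iff₀ (by norm_num)]; nlinarith [Real.pi_pos])
  linarith

lemma sum_aux : ∑ k ∈ (Finset.range 31).erase 12,
    Real.log (2 * Real.sin (((5 * k + 2 : ℕ) : ℝ) * π / 155)) = 0 := by
  have h := congrArg Real.log prod_aux
  rw [Real.log_prod, Real.log_abs] at h
  · simp only [Real.log_abs] at h
    rw [← Finset.add_sum_erase _ _ (show 12 ∈ Finset.range 31 by decide)] at h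
    norm_num at h ⊢
    linarith
  · intro k hk
    rw [Finset.mem_range] at hk
    exact abs_ne_zero.mpr (sin_pos_aux _ (by omega) (by omega)).ne'

lemma main_aux : ∑ s ∈ Finset.filter (fun s => Nat.gcd s 155 = 1) (Finset.Icc 2 77),
        (chi155 s - 1) * Real.log (2 * Real.sin ((s : ℝ) * π / 155)) = 0 := by
  have e : ((Finset.range 31).erase 12).image (fun k => min (5 * k + 2) (153 - 5 * k)) =
      (Finset.filter (fun s => Nat.gcd s 155 = 1) (Finset.Icc 2 77)).filter
        (fun s => s % 5 = 2 ∨ s % 5 = 3) := by decide +kernel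
  have hs : ∑ s ∈ (Finset.filter (fun s => Nat.gcd s 155 = 1) (Finset.Icc 2 77)).filter
        (fun s => s % 5 = 2 ∨ s % 5 = 3), Real.log (2 * Real.sin ((s : ℝ) * π / 155)) = 0 := by
    rw [← e, Finset.sum_image, ← sum_aux]
    · refine Finset.sum_congr rfl fun k hk => ?_
      have hk' : k < 31 := Finset.mem_range.mp (Finset.mem_of_mem_erase hk)
      rcases min_choice (5 * k + 2) (153 - 5 * k) with h | h
      · rw [h]
      · rw [h, ← Real.sin_pi_sub]
        congr 3
        rw [Nat.cast_sub (by omega)]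
        push_cast
        ring
    · intro a ha b hb hab
      have ha' : a < 31 := Finset.mem_range.mp (Finset.mem_of_mem_erase ha)
      have hb' : b < 31 := Finset.mem_range.mp (Finset.mem_of_mem_erase hb)
      simp only at hab
      omega
  rw [Finset.sum_filter] at hs
  rw [← mul_zero (-2 : ℝ), ← hs, Finset.mul_sum]
  refine Finset.sum_congr rfl fun s hs => ?_
  have h5 : s % 5 ≠ 0 := by
    intro h
    have h1 := (Finset.mem_filter.mp hs).2
    have : 5 ∣ Nat.gcd s 155 := Nat.dvd_gcd (Nat.dvd_of_mod_eq_zero h) (by norm_num)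
    rw [h1] at this
    omega
  by_cases h : s % 5 = 2 ∨ s % 5 = 3
  · rw [if_pos h, chi155, if_neg (by omega), if_pos h]; ring
  · rw [if_neg h, chi155, if_pos (by omega)]; ring

/-- For `q = 155`, the combination `∑_{2 ≤ s ≤ 77, (s,155)=1} (χ(s) - 1) log(2 sin(sπ/155))`
vanishes; in particular the numbers `log(2 sin(sπ/155))` for `2 ≤ s ≤ 77`, `gcd(s,155) = 1`,
are linearly dependent over the field of algebraic numbers. -/
theorem stmt5 :
    (∑ s ∈ Finset.filter (fun s => Nat.gcd s 155 = 1) (Finset.Icc 2 77),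
        (chi155 s - 1) * Real.log (2 * Real.sin ((s : ℝ) * π / 155)) = 0) ∧
      ∃ c : ℕ → ℝ, (∀ s, IsAlgebraic ℚ (c s)) ∧
        (∃ s ∈ Finset.filter (fun s => Nat.gcd s 155 = 1) (Finset.Icc 2 77), c s ≠ 0) ∧
        ∑ s ∈ Finset.filter (fun s => Nat.gcd s 155 = 1) (Finset.Icc 2 77),
          c s * Real.log (2 * Real.sin ((s : ℝ) * π / 155)) = 0 := by
  refine ⟨main_aux, fun s => chi155 s - 1, ?_, ⟨2, by decide, ?_⟩, main_aux⟩
  · intro s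
    have : chi155 s = 1 ∨ chi155 s = -1 ∨ chi155 s = 0 := by
      unfold chi155
      split_ifs <;> simp
    refine IsAlgebraic.sub ?_ isAlgebraic_one
    rcases this with h | h | h <;> rw [h]
    · exact isAlgebraic_one
    · exact isAlgebraic_one.neg
    · exact isAlgebraic_zero
  · norm_num [chi155]
end
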